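/- arXiv:2111.03771 — 6 statements merged into one kernel-verified Lean document; each statement's English description precedes it below -/
import Mathlib

section
/- Let d ≥ 2 and fix l ∈ [1,n]. Write the characteristic polynomial of B as p_B(t) = det(t·I − B) = Σ_{k=0}^n c_k t^k with c_k ∈ R and c_n = 1. Then for every 0 ≤ k ≤ n−1, c_k = d^{−(n−k)} · J_{α(n−k,l)}; in particular c_k ∈ J_{d,n} for 0 ≤ k ≤ n−1. -/
open MvPolynomial Matrix

noncomputable section

/-- `R n` is the polynomial ring `ℚ[a_{i,j} : 1 ≤ i,j ≤ n]`. -/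
abbrev JacR (n : ℕ) : Type := MvPolynomial (Fin n × Fin n) ℚ

/-- The `i`-th component of the degree `d`-linear map:
`f_i = x_i - (∑_j a_{i,j} x_j)^d`. -/
def degLinMap (n d : ℕ) (i : Fin n) : MvPolynomial (Fin n) (JacR n) :=
  X i - (∑ j : Fin n, C (X (i, j) : JacR n) * X j) ^ d

/-- The differential `D(f)`, with `(D(f))_{i,j} = ∂f_i/∂x_j`. -/
def diffMat (n d : ℕ) : Matrix (Fin n) (Fin n) (MvPolynomial (Fin n) (JacR n)) :=
  fun i j => pderiv j (degLinMap n d i)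

/-- The Jacobian `Jac(f) = det(D(f))`. -/
def jacPoly (n d : ℕ) : MvPolynomial (Fin n) (JacR n) := (diffMat n d).det

/-- The ideal `J_{d,n}` generated by the coefficients `J_α` of `Jac(f)` for all
nonzero multi-degrees `α`. -/
def Jideal (n d : ℕ) : Ideal (JacR n) :=
  Ideal.span {r : JacR n | ∃ α : Fin n →₀ ℕ, α ≠ 0 ∧ coeff α (jacPoly n d) = r}

/-- The matrix `B` with entries `B_{i,j} = a_{i,j} · a_{i,l}^{d-1}`. -/
def Bmat (n d : ℕ) (l : Fin n) : Matrix (Fin n) (Fin n) (JacR n) :=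
  fun i j => X (i, j) * X (i, l) ^ (d - 1)

/-- Restriction to the `l`-th axis: `x_l ↦ X`, `x_j ↦ 0` for `j ≠ l`. -/
def axisHom (n : ℕ) (l : Fin n) :
    MvPolynomial (Fin n) (JacR n) →ₐ[JacR n] Polynomial (JacR n) :=
  MvPolynomial.aeval (fun j => if j = l then Polynomial.X else 0)

lemma axisHom_coeff (n : ℕ) (l : Fin n) (p : MvPolynomial (Fin n) (JacR n)) (m : ℕ) :
    (axisHom n l p).coeff m = coeff (Finsupp.single l m) p := by
  classical
  induction p using MvPolynomial.induction_on' with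
  | add p q hp hq => simp [hp, hq]
  | monomial u a =>
    rw [axisHom, MvPolynomial.aeval_monomial, MvPolynomial.coeff_monomial]
    by_cases h : ∃ k, u = Finsupp.single l k
    · obtain ⟨k, rfl⟩ := h
      rw [Finsupp.prod_single_index (by simp)]
      simp only [if_true, Polynomial.algebraMap_eq, Polynomial.coeff_C_mul_X_pow]
      by_cases hk : m = k
      · simp [hk]
      · have : Finsupp.single l k ≠ Finsupp.single l m := fun h =>
          hk (Finsupp.single_injective l h).symm
        simp [hk, this]
    · have h1 : u ≠ Finsupp.single l m := fun e => h ⟨m, e⟩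
      have h2 : ∃ j, j ≠ l ∧ u j ≠ 0 := by
        by_contra hc
        push Not at hc
        refine h ⟨u l, ?_⟩
        ext j
        by_cases hj : j = l
        · subst hj; simp
        · rw [hc j hj, Finsupp.single_eq_of_ne hj]
      obtain ⟨j, hj, hu⟩ := h2
      have : (u.prod fun i k => (if i = l then (Polynomial.X : Polynomial (JacR n)) else 0) ^ k)
          = 0 := by
        rw [Finsupp.prod]
        refine Finset.prod_eq_zero (Finsupp.mem_support_iff.mpr hu) ?_
        simp [hj, hu]
      rw [this, if_neg h1]
      simp

lemma axisHom_jac (n d : ℕ) (hd : 2 ≤ d) (l : Fin n) :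
    axisHom n l (jacPoly n d) =
      Polynomial.expand (JacR n) (d - 1)
        ((Bmat n d l).charpolyRev.comp (Polynomial.C (d : JacR n) * Polynomial.X)) := by
  rw [jacPoly, Matrix.charpolyRev, ← Polynomial.coe_compRingHom_apply, RingHom.map_det,
    AlgHom.map_det, AlgHom.map_det]
  congr 1
  ext1 i j
  have hs : axisHom n l (∑ j : Fin n, C (X (i, j) : JacR n) * X j)
      = Polynomial.C (X (i, l)) * Polynomial.X := by
    simp [axisHom]
  have hp : pderiv j (∑ j : Fin n, C (X (i, j) : JacR n) * X j)
      = (C (X (i, j) : JacR n) : MvPolynomial (Fin n) (JacR n)) := by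
    simp [Pi.single_apply]
  have h1 : axisHom n l (pderiv j (X i)) = if i = j then 1 else 0 := by
    rw [pderiv_X]
    by_cases h : i = j
    · subst h; simp
    · simp [h]
  have hC : ∀ r, axisHom n l (C r) = Polynomial.C r := fun r => by simp [axisHom]
  simp only [AlgHom.mapMatrix_apply, RingHom.mapMatrix_apply, Matrix.map_apply, diffMat,
    degLinMap, map_sub, pderiv_pow, map_mul, map_pow, hs, hp, h1, hC, Matrix.sub_apply,
    Matrix.smul_apply, Bmat, Matrix.one_apply, smul_eq_mul, map_natCast]
  congr 1
  · split_ifs <;> simp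
  · simp
    ring

/-- writing the characteristic polynomial `p_B(t) = det(tI - B) = ∑_k c_k t^k`
(with `c_n = 1`), for every `0 ≤ k ≤ n-1` one has `c_k = d^{-(n-k)} · J_{α(n-k,l)}`;
in particular `c_k ∈ J_{d,n}`. -/
theorem stmt6 (n d : ℕ) (hn : 1 ≤ n) (hd : 2 ≤ d) (l : Fin n) :
    ∀ k < n,
      (Bmat n d l).charpoly.coeff k =
        ((d : ℚ) ^ (n - k))⁻¹ • coeff (Finsupp.single l ((n - k) * (d - 1))) (jacPoly n d) ∧
      (Bmat n d l).charpoly.coeff k ∈ Jideal n d := by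
  intro k hk
  have hq : (d : ℚ) ≠ 0 := by positivity
  have key : coeff (Finsupp.single l ((n - k) * (d - 1))) (jacPoly n d)
      = ((d : ℚ) ^ (n - k)) • (Bmat n d l).charpoly.coeff k := by
    rw [← axisHom_coeff, axisHom_jac n d hd l, Polynomial.coeff_expand_mul (by omega),
      Polynomial.comp_C_mul_X_coeff, ← Matrix.reverse_charpoly, Polynomial.coeff_reverse,
      Matrix.charpoly_natDegree_eq_dim, Fintype.card_fin, Polynomial.revAt_le (by omega),
      Nat.sub_sub_self hk.le, MvPolynomial.smul_eq_C_mul, mul_comm]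
    simp
  have main : (Bmat n d l).charpoly.coeff k =
        ((d : ℚ) ^ (n - k))⁻¹ • coeff (Finsupp.single l ((n - k) * (d - 1))) (jacPoly n d) := by
    rw [key, inv_smul_smul₀ (pow_ne_zero _ hq)]
  refine ⟨main, ?_⟩
  rw [main, MvPolynomial.smul_eq_C_mul]
  refine Ideal.mul_mem_left _ _ (Ideal.subset_span ⟨_, ?_, rfl⟩)
  rw [Ne, Finsupp.single_eq_zero]
  exact (Nat.mul_pos (by omega) (by omega)).ne'
end
end

section
/- Let n = 3 and d = 2, and set z₁ = a_{1,2} · Σ_{m=1}^{3} Σ_{p=1}^{3} a_{1,m} a_{m,3} a_{m,p} a_{p,1}² ∈ R (this is z(fern_{2,3}, μ) for the root-leaf labeling μ = (1,(2),(3),(1,1))). Then z₁² ∈ J_{2,3}; in particular z₁ lies in the radical of J_{2,3} but not in J_{2,3} itself. -/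
open MvPolynomial Matrix

noncomputable section

/-- `R` is the polynomial ring `ℚ[a_{i,j} : 1 ≤ i,j ≤ 3]`. -/
abbrev JacR3 : Type := MvPolynomial (Fin 3 × Fin 3) ℚ

/-- The `i`-th component of the degree `2`-linear map on 3 variables:
`f_i = x_i - (∑_j a_{i,j} x_j)²`. -/
def degLinMap23 (i : Fin 3) : MvPolynomial (Fin 3) JacR3 :=
  X i - (∑ j : Fin 3, C (X (i, j) : JacR3) * X j) ^ 2

/-- The Jacobian `Jac(f) = det(D(f))` with `(D(f))_{i,j} = ∂f_i/∂x_j`. -/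
def jacPoly23 : MvPolynomial (Fin 3) JacR3 :=
  (Matrix.of fun i j : Fin 3 => pderiv j (degLinMap23 i)).det

/-- The ideal `J_{2,3}` generated by the coefficients `J_α` of `Jac(f)` for all
nonzero multi-degrees `α`. -/
def Jideal23 : Ideal JacR3 :=
  Ideal.span {r : JacR3 | ∃ α : Fin 3 →₀ ℕ, α ≠ 0 ∧ coeff α jacPoly23 = r}

/-- `z₁ = a_{1,2} ∑_{m,p} a_{1,m} a_{m,3} a_{m,p} a_{p,1}²`, i.e.
`z(fern_{2,3}, (1,(2),(3),(1,1)))`.  (Indices `1,2,3` are `0,1,2 : Fin 3`.) -/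
def zOne : JacR3 :=
  (X (0, 1) : JacR3) *
    ∑ m : Fin 3, ∑ p : Fin 3, X (0, m) * X (m, 2) * X (m, p) * X (p, 0) ^ 2

set_option linter.unusedVariables false

/-- Part 1 of the cofactor of the coefficient at `x₁`. -/
def cof_l0_0 {K : Type*} [CommRing K] (a b c d e f g h i : K) : K :=
  a^6*b*c^2 - a^5*c^2*e^2 + 2*a^4*b^2*c*d*f - a^4*b*c^2*d*e + a^4*b*c^2*g*i - a^4*b*e*f*i^2
      - a^4*c*e^2*i^2 + a^4*c*e*f*h*i + a^3*b^2*c^2*d^2 + 2*a^3*b*c^3*g^2 + a^3*e^4*f^2 +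
      a^3*e^2*f^2*h*i

/-- Part 2 of the cofactor of the coefficient at `x₁`. -/
def cof_l0_1 {K : Type*} [CommRing K] (a b c d e f g h i : K) : K :=
  a^2*b^3*d^2*f^2 + 2*a^2*b^2*c*f^2*g^2 + a^2*b*c^2*d^2*h*i + 2*a^2*b*c^2*g^2*i^2 -
      a^2*b*g*i^5 - a^2*c*e*f*g*h*i^2 - a*b^2*c^2*d^3*e + a*b^2*c^2*d^2*g*i - a*b^2*c^2*d*f*g^2
      + 2*a*b^2*f^2*g^2*i^2 - 2*a*b*c^3*d*e*g^2 + a*b*c^3*g^3*i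

/-- Part 3 of the cofactor of the coefficient at `x₁`. -/
def cof_l0_2 {K : Type*} [CommRing K] (a b c d e f g h i : K) : K :=
  -a*b*c*e^2*f^2*g^2 + a*b*c*e*f*g^2*i^2 - a*b*c*g^2*i^4 + a*c^4*g^3*h - 2*a*c^2*e^3*f*g^2 -
      2*a*c^2*e*f*g^2*h*i - a*e^2*f^2*g*h*i^2 - a*e^2*g*i^5 - a*e*f*g*h*i^4 - a*g*h*i^6 -
      b^3*d^3*e*f^2 - 2*b^3*d^3*f*i^2

/-- Part 4 of the cofactor of the coefficient at `x₁`. -/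
def cof_l0_3 {K : Type*} [CommRing K] (a b c d e f g h i : K) : K :=
  -b^3*d^2*f^2*g*i + 2*b^2*c*d^3*f*h*i + 2*b^2*c*d^2*e*f*g*i + 2*b^2*c*f^2*g^3*i -
      b*c^2*d^3*e*h*i + b*c^2*d^2*g*h*i^2 - 2*b*c^2*d*e^2*f*g^2 - b*c^2*d*e*g^2*i^2 -
      2*b*c^2*d*f*g^2*h*i + b*c^2*e*f*g^3*i + b*c^2*g^3*i^3 + 2*b*f^4*g^2*h^2

/-- Part 5 of the cofactor of the coefficient at `x₁`. -/
def cof_l0_4 {K : Type*} [CommRing K] (a b c d e f g h i : K) : K :=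
  2*b*f^2*g^2*h*i^3 + c^3*g^3*h*i^2 - 2*c*e^4*f^2*g^2 - 2*c*e^2*f^2*g^2*h*i - c*e^2*g^2*i^4
      - c*e*f*g^2*h*i^3 + c*f^2*g^2*h^2*i^2 - c*g^2*h*i^5

/-- Part 1 of the cofactor of the coefficient at `x₂`. -/
def cof_l1_0 {K : Type*} [CommRing K] (a b c d e f g h i : K) : K :=
  -a^6*c*e*f - a^5*e^2*f^2 + a^4*b*c^2*d^2 - a^4*c*g*i^3 + a^3*d*e^2*f*i^2 +
      3*a^2*b*c^2*d*f*g^2 - 2*a^2*b*f^2*g^2*i^2 - a^2*c^3*g^3*i + a^2*c*d*f*g*h*i^2 +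
      a*b^2*c^2*d^4 + 2*a*b^2*d*f^3*g^2 + 2*a*b*c*d*f*g^2*i^2

/-- Part 2 of the cofactor of the coefficient at `x₂`. -/
def cof_l1_1 {K : Type*} [CommRing K] (a b c d e f g h i : K) : K :=
  -2*a*b*c*f^2*g^3*i - a*c^2*g^3*i^3 + a*d*e*f^2*g*h*i^2 + a*d*e*g*i^5 + a*d*f*g*h*i^4 -
      a*e^3*f^3*g^2 + a*e^2*f^2*g^2*i^2 - a*f^4*g^2*h^2 - 2*b^2*c*d^3*f*g*i + b*c^2*d^4*h*i -
      b*c^2*d^2*g^2*i^2 + b*c^2*d*f*g^3*i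

/-- Part 3 of the cofactor of the coefficient at `x₂`. -/
def cof_l1_2 {K : Type*} [CommRing K] (a b c d e f g h i : K) : K :=
  2*b*c^2*f^2*g^4 - 2*b*e*f^3*g^3*i - 2*b*f^2*g^3*i^3 + c^3*d*f*g^3*h - 2*c*d*e^2*f*g^2*i^2
      + c*d*e*g^2*i^4 + c*d*f^3*g^2*h^2 + c*d*f*g^2*h*i^3 + 2*c*e^2*f^2*g^3*i + c*g^3*i^5

/-- Part 1 of the cofactor of the coefficient at `x₃`. -/
def cof_l2_0 {K : Type*} [CommRing K] (a b c d e f g h i : K) : K :=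
  a^6*b*e*f + a^6*c*e^2 + a^4*b*g*i^3 + a^4*c*d*e^3 + a^4*c*e^2*g*i - a^3*d*e^4*f -
      a^3*d*e^2*f*h*i - a^3*e^3*f*g*i + a^3*e^2*g*i^3 + a^3*g*h*i^4 + 2*a^2*b^3*d^3*f -
      a^2*b*d*f*g*h*i^2

/-- Part 2 of the cofactor of the coefficient at `x₃`. -/
def cof_l2_1 {K : Type*} [CommRing K] (a b c d e f g h i : K) : K :=
  a^2*b*e^2*f^2*g^2 - a^2*b*e*f*g^2*i^2 + a^2*b*g^2*i^4 - a^2*c^3*g^3*h + 2*a^2*c*e^3*f*g^2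
      + 2*a^2*c*e*f*g^2*h*i + 2*a*b^2*c^2*d^2*g^2 - 2*a*b^2*d*e*f^2*g^2 + a*b*c^3*g^4 -
      a*b*c*d*f*g^2*h*i - a*b*c*e*f*g^3*i + a*c^2*e^2*g^3*i

/-- Part 3 of the cofactor of the coefficient at `x₃`. -/
def cof_l2_2 {K : Type*} [CommRing K] (a b c d e f g h i : K) : K :=
  -a*d*f*g*h^2*i^3 + a*e^4*f^2*g^2 - a*e^3*f*g^2*i^2 + a*e^2*g^2*i^4 + a*e*f^3*g^2*h^2 +
      a*g^2*h*i^5 + 2*b^3*d^4*e*f + 2*b^3*d^3*f*g*i + 2*b^3*d^2*f^2*g^2 + 2*b*c^2*d^2*e^2*g^2 +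
      2*b*c^2*d^2*g^2*h*i - b*c^2*e*f*g^4

/-- Part 4 of the cofactor of the coefficient at `x₃`. -/
def cof_l2_3 {K : Type*} [CommRing K] (a b c d e f g h i : K) : K :=
  -2*b*d*f^3*g^2*h^2 + 2*b*e^2*f^2*g^3*i - c^3*d*e*g^3*h + 2*c*d*e^4*f*g^2 +
      2*c*d*e^2*f*g^2*h*i - c*d*e*f^2*g^2*h^2 - c*d*f*g^2*h^2*i^2

/-- Part 1 of the cofactor of the coefficient at `x₃²`. -/
def cof_q22_0 {K : Type*} [CommRing K] (a b c d e f g h i : K) : K :=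
  -a*b*c*d*e*g^2 + a*c^2*g^3*h - a*e^3*f*g^2 - a*f^2*g^2*h^2 - 2*b*d*f*g^2*h*i +
      2*b*f^2*g^3*h + c*d*f*g^2*h^2 + c*g^3*h*i^2

/-- Part 1 of the cofactor of the coefficient at `x₁x₂x₃`. -/
def cof_c012_0 {K : Type*} [CommRing K] (a b c d e f g h i : K) : K :=
  b*f^2*g^2

set_option maxHeartbeats 4000000 in
/-- Explicit certificate: `z₁² / a₁₂` is a combination of five of the Jacobian coefficients. -/
theorem cert_identity {K : Type*} [CommRing K] (a b c d e f g h i : K) :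
    b * (((a*c*(a*a^2 + b*d^2 + c*g^2) +
      b*f*(d*a^2 + e*d^2 + f*g^2) + c*i*(g*a^2 + h*d^2 + i*g^2))))^2 =
    (cof_l0_0 a b c d e f g h i +
      cof_l0_1 a b c d e f g h i +
      cof_l0_2 a b c d e f g h i +
      cof_l0_3 a b c d e f g h i +
      cof_l0_4 a b c d e f g h i) *
      (a*a + e*d + i*g) +
    (cof_l1_0 a b c d e f g h i +
      cof_l1_1 a b c d e f g h i +
      cof_l1_2 a b c d e f g h i) *
      (a*b + e*e + i*h) +
    (cof_l2_0 a b c d e f g h i +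
      cof_l2_1 a b c d e f g h i +
      cof_l2_2 a b c d e f g h i +
      cof_l2_3 a b c d e f g h i) *
      (a*c + e*f + i*i) +
    (cof_q22_0 a b c d e f g h i) *
      ((e*a - d*b)*(f*c) + (i*a - g*c)*(i*c) + (i*e - h*f)*(i*f)) +
    (cof_c012_0 a b c d e f g h i) *
      ((a*(e*i - f*h) - b*(d*i - f*g) + c*(d*h - e*g)) *
      (a*e*i + a*f*h + b*d*i + b*f*g + c*d*h + c*e*g)) := by
  simp only [cof_l0_0, cof_l0_1, cof_l0_2, cof_l0_3, cof_l0_4, cof_l1_0, cof_l1_1, cof_l1_2, cof_l2_0, cof_l2_1, cof_l2_2, cof_l2_3, cof_q22_0, cof_c012_0]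
  ring

/-- The Jacobian matrix, with entries expanded. -/
theorem jac_det : jacPoly23 = (Matrix.of fun i j : Fin 3 =>
    (if i = j then 1 else 0) -
      2 * (∑ k : Fin 3, C (X (i, k) : JacR3) * X k) * C (X (i, j) : JacR3)).det := by
  unfold jacPoly23
  congr 1
  ext1 i j
  simp only [Matrix.of_apply, degLinMap23, map_sub, pderiv_X, Derivation.leibniz_pow, map_sum, Derivation.leibniz, pderiv_C]
  fin_cases i <;> fin_cases j <;> simp [Fin.sum_univ_three, Pi.single_apply] <;> ring


/-- The monomial `r x₁ᵖ x₂^q x₃ˢ`. -/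
def mono3 {K : Type*} [CommRing K] (p q s : ℕ) (r : K) : MvPolynomial (Fin 3) K :=
  C r * X 0 ^ p * X 1 ^ q * X 2 ^ s

theorem coeff_mono3 {K : Type*} [CommRing K] (p q s p' q' s' : ℕ) (r : K) :
    coeff (Finsupp.single 0 p + Finsupp.single 1 q + Finsupp.single 2 s) (mono3 p' q' s' r) =
      if p' = p ∧ q' = q ∧ s' = s then r else 0 := by
  have h : mono3 p' q' s' r =
      monomial (Finsupp.single 0 p' + Finsupp.single 1 q' + Finsupp.single 2 s') r := by
    simp [mono3, X_pow_eq_monomial, C_mul_monomial, monomial_mul]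
  rw [h, coeff_monomial]
  congr 1
  simp [Finsupp.ext_iff, Fin.forall_fin_succ]

set_option maxRecDepth 10000 in
set_option maxHeartbeats 4000000 in
/-- All coefficients of the determinant `det (1 - 2 diag(Ax) A)`. -/
theorem det_expand {K : Type*} [CommRing K] (A : Fin 3 × Fin 3 → K) (a b c d e f g h i : K)
    (ha : A (0, 0) = a) (hb : A (0, 1) = b) (hc : A (0, 2) = c)
    (hd : A (1, 0) = d) (he : A (1, 1) = e) (hf : A (1, 2) = f)
    (hg : A (2, 0) = g) (hh : A (2, 1) = h) (hi : A (2, 2) = i) :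
    (Matrix.of fun i j : Fin 3 => ((if i = j then 1 else 0) -
      2 * (∑ k : Fin 3, C (A (i, k)) * X k) * C (A (i, j)) : MvPolynomial (Fin 3) K)).det =
    mono3 0 0 0 1 +
    mono3 1 0 0 (-2 * (a*a + e*d + i*g)) +
    mono3 0 1 0 (-2 * (a*b + e*e + i*h)) +
    mono3 0 0 1 (-2 * (a*c + e*f + i*i)) +
    mono3 2 0 0 (4 * (a^2*d*e - a*b*d^2 + a^2*g*i - a*c*g^2 + d*e*g*i - d*f*g*h)) +
    mono3 1 1 0 (4 * (a^2*e^2 - b^2*d^2 + a*b*g*i + a^2*h*i - b*c*g^2 - a*c*g*h + e^2*g*i + d*e*h*i - e*f*g*h -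
      d*f*h^2)) +
    mono3 1 0 1 (4 * (a*c*d*e + a^2*e*f - b*c*d^2 - a*b*d*f + a^2*i^2 - c^2*g^2 + e*f*g*i + d*e*i^2 - f^2*g*h -
      d*f*h*i)) +
    mono3 0 2 0 (4 * (a*b*e^2 - b^2*d*e + a*b*h*i - b*c*g*h + e^2*h*i - e*f*h^2)) +
    mono3 0 1 1 (4 * (a*c*e^2 + a*b*e*f - b*c*d*e - b^2*d*f + a*c*h*i + a*b*i^2 - c^2*g*h - b*c*g*i + e^2*i^2 -
      f^2*h^2)) +
    mono3 0 0 2 (4 * ((e*a - d*b)*(f*c) + (i*a - g*c)*(i*c) + (i*e - h*f)*(i*f))) +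
    mono3 3 0 0 (-8 * ((a*(e*i - f*h) - b*(d*i - f*g) + c*(d*h - e*g)) *
        (a*d*g))) +
    mono3 2 1 0 (-8 * ((a*(e*i - f*h) - b*(d*i - f*g) + c*(d*h - e*g)) *
        (a*d*h + a*e*g + b*d*g))) +
    mono3 2 0 1 (-8 * ((a*(e*i - f*h) - b*(d*i - f*g) + c*(d*h - e*g)) *
        (a*d*i + a*f*g + c*d*g))) +
    mono3 1 2 0 (-8 * ((a*(e*i - f*h) - b*(d*i - f*g) + c*(d*h - e*g)) *
        (a*e*h + b*d*h + b*e*g))) +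
    mono3 1 1 1 (-8 * ((a*(e*i - f*h) - b*(d*i - f*g) + c*(d*h - e*g)) *
        (a*e*i + a*f*h + b*d*i + b*f*g + c*d*h + c*e*g))) +
    mono3 1 0 2 (-8 * ((a*(e*i - f*h) - b*(d*i - f*g) + c*(d*h - e*g)) *
        (a*f*i + c*d*i + c*f*g))) +
    mono3 0 3 0 (-8 * ((a*(e*i - f*h) - b*(d*i - f*g) + c*(d*h - e*g)) *
        (b*e*h))) +
    mono3 0 2 1 (-8 * ((a*(e*i - f*h) - b*(d*i - f*g) + c*(d*h - e*g)) *
        (b*e*i + b*f*h + c*e*h))) +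
    mono3 0 1 2 (-8 * ((a*(e*i - f*h) - b*(d*i - f*g) + c*(d*h - e*g)) *
        (b*f*i + c*e*i + c*f*h))) +
    mono3 0 0 3 (-8 * ((a*(e*i - f*h) - b*(d*i - f*g) + c*(d*h - e*g)) *
        (c*f*i))) := by
  have n01 : (0 : Fin 3) ≠ 1 := by decide
  have n02 : (0 : Fin 3) ≠ 2 := by decide
  have n12 : (1 : Fin 3) ≠ 2 := by decide
  simp only [Matrix.det_fin_three, Matrix.of_apply, Fin.sum_univ_three, mono3,
    ha, hb, hc, hd, he, hf, hg, hh, hi, if_true, if_neg n01, if_neg n02, if_neg n12,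
    if_neg n01.symm, if_neg n02.symm, if_neg n12.symm, map_add, map_sub, map_mul, map_neg,
    map_pow, map_ofNat, map_one]
  ring

theorem coeff_mem (p q s : ℕ) (h : ¬ (p = 0 ∧ q = 0 ∧ s = 0)) (u : ℚ) (hu : u ≠ 0) (r : JacR3)
    (hr : coeff (Finsupp.single 0 p + Finsupp.single 1 q + Finsupp.single 2 s) jacPoly23 = C u * r) :
    r ∈ Jideal23 := by
  have h1 : C u * r ∈ Jideal23 := by
    refine Ideal.subset_span ⟨_, ?_, hr⟩
    intro h0
    apply h
    simpa [Finsupp.ext_iff, Fin.forall_fin_succ, and_assoc] using h0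
  have h2 := Jideal23.mul_mem_left (C u⁻¹) h1
  rwa [← mul_assoc, ← C_mul, inv_mul_cancel₀ hu, C_1, one_mul] at h2

theorem zOne_sq_mem : zOne ^ 2 ∈ Jideal23 := by
  obtain ⟨A, hA⟩ : ∃ A : Fin 3 × Fin 3 → JacR3, A = X := ⟨X, rfl⟩
  obtain ⟨a, ha⟩ : ∃ a, A (0, 0) = a := ⟨_, rfl⟩
  obtain ⟨b, hb⟩ : ∃ b, A (0, 1) = b := ⟨_, rfl⟩
  obtain ⟨c, hc⟩ : ∃ c, A (0, 2) = c := ⟨_, rfl⟩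
  obtain ⟨d, hd⟩ : ∃ d, A (1, 0) = d := ⟨_, rfl⟩
  obtain ⟨e, he⟩ : ∃ e, A (1, 1) = e := ⟨_, rfl⟩
  obtain ⟨f, hf⟩ : ∃ f, A (1, 2) = f := ⟨_, rfl⟩
  obtain ⟨g, hg⟩ : ∃ g, A (2, 0) = g := ⟨_, rfl⟩
  obtain ⟨h, hh⟩ : ∃ h, A (2, 1) = h := ⟨_, rfl⟩
  obtain ⟨i, hi⟩ : ∃ i, A (2, 2) = i := ⟨_, rfl⟩
  have hdet := jac_det
  rw [← hA, det_expand A a b c d e f g h i ha hb hc hd he hf hg hh hi] at hdet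
  have c2 : (C (-2) : JacR3) = -2 := by rw [map_neg]; rfl
  have c4 : (C 4 : JacR3) = 4 := rfl
  have c8 : (C (-8) : JacR3) = -8 := by rw [map_neg]; rfl
  have m_l0 : a*a + e*d + i*g ∈ Jideal23 := by
    refine coeff_mem 1 0 0 (by decide) (-2) (by norm_num) _ ?_
    rw [hdet]
    simp only [coeff_add, coeff_mono3]
    norm_num [c2, c4, c8]
  have m_l1 : a*b + e*e + i*h ∈ Jideal23 := by
    refine coeff_mem 0 1 0 (by decide) (-2) (by norm_num) _ ?_
    rw [hdet]
    simp only [coeff_add, coeff_mono3]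
    norm_num [c2, c4, c8]
  have m_l2 : a*c + e*f + i*i ∈ Jideal23 := by
    refine coeff_mem 0 0 1 (by decide) (-2) (by norm_num) _ ?_
    rw [hdet]
    simp only [coeff_add, coeff_mono3]
    norm_num [c2, c4, c8]
  have m_q22 : (e*a - d*b)*(f*c) + (i*a - g*c)*(i*c) + (i*e - h*f)*(i*f) ∈ Jideal23 := by
    refine coeff_mem 0 0 2 (by decide) (4) (by norm_num) _ ?_
    rw [hdet]
    simp only [coeff_add, coeff_mono3]
    norm_num [c2, c4, c8]
  have m_c012 : (a*(e*i - f*h) - b*(d*i - f*g) + c*(d*h - e*g)) *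
        (a*e*i + a*f*h + b*d*i + b*f*g + c*d*h + c*e*g) ∈ Jideal23 := by
    refine coeff_mem 1 1 1 (by decide) (-8) (by norm_num) _ ?_
    rw [hdet]
    simp only [coeff_add, coeff_mono3]
    norm_num [c2, c4, c8]
  have hz : zOne ^ 2 = b * (b * (a*c*(a*a^2 + b*d^2 + c*g^2) +
      b*f*(d*a^2 + e*d^2 + f*g^2) + c*i*(g*a^2 + h*d^2 + i*g^2)) ^ 2) := by
    simp only [zOne, Fin.sum_univ_three, ← hA, ha, hb, hc, hd, he, hf, hg, hh, hi]
    ring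
  rw [hz, cert_identity]
  refine Ideal.mul_mem_left _ _ ?_
  exact add_mem (add_mem (add_mem (add_mem (Ideal.mul_mem_left _ _ m_l0)
    (Ideal.mul_mem_left _ _ m_l1)) (Ideal.mul_mem_left _ _ m_l2))
    (Ideal.mul_mem_left _ _ m_q22)) (Ideal.mul_mem_left _ _ m_c012)

/-- Specialisation of the coefficient matrix to `t` times a permutation matrix. -/
def spec (σ : Equiv.Perm (Fin 3)) : JacR3 →ₐ[ℚ] Polynomial ℚ :=
  aeval fun ij => if σ ij.1 = ij.2 then Polynomial.X else 0

/-- The inverse 3-cycle `0 ↦ 2 ↦ 1 ↦ 0`. -/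
def cyd : Equiv.Perm (Fin 3) := (finRotate 3).symm

/-- The 3-cycle `0 ↦ 1 ↦ 2 ↦ 0`. -/
def cyc : Equiv.Perm (Fin 3) := finRotate 3

theorem spec_jac (σ : Equiv.Perm (Fin 3)) (hσ : σ = cyc ∨ σ = cyd) :
    MvPolynomial.map (spec σ).toRingHom jacPoly23 =
      1 - C (8 * Polynomial.X ^ 6) * (X 0 * X 1 * X 2) := by
  rw [jac_det, Matrix.det_fin_three]
  have e0 : cyc 0 = 1 := by decide
  have e1 : cyc 1 = 2 := by decide
  have e2 : cyc 2 = 0 := by decide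
  have f0 : cyd 0 = 2 := by decide
  have f1 : cyd 1 = 0 := by decide
  have f2 : cyd 2 = 1 := by decide
  have c8 : (C 8 : MvPolynomial (Fin 3) (Polynomial ℚ)) = 8 := rfl
  rcases hσ with rfl | rfl
  · simp [Fin.sum_univ_three, spec, e0, e1, e2, c8]
    ring
  · simp [Fin.sum_univ_three, spec, f0, f1, f2, c8]
    ring

theorem spec_gen (σ : Equiv.Perm (Fin 3)) (hσ : σ = cyc ∨ σ = cyd) (α : Fin 3 →₀ ℕ)
    (hα : α ≠ 0) :
    spec σ (coeff α jacPoly23) =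
      Polynomial.X ^ 6 * Polynomial.C (- 8 * coeff α (X 0 * X 1 * X 2 : MvPolynomial (Fin 3) ℚ)) := by
  have h := congrArg (coeff α) (spec_jac σ hσ)
  rw [coeff_map] at h
  have hX : (X 0 * X 1 * X 2 : MvPolynomial (Fin 3) (Polynomial ℚ)) =
      MvPolynomial.map Polynomial.C (X 0 * X 1 * X 2) := by simp
  rw [coeff_sub, coeff_C_mul, coeff_one, if_neg hα.symm, hX, coeff_map] at h
  refine Eq.trans h ?_
  simp only [map_mul, map_neg]
  have : (Polynomial.C (8 : ℚ)) = 8 := rfl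
  rw [this]
  ring

theorem spec_coeff_zero (σ : Equiv.Perm (Fin 3)) (r : JacR3) :
    (spec σ r).coeff 0 = constantCoeff r := by
  have : (Polynomial.constantCoeff.comp (spec σ).toRingHom) = (constantCoeff : JacR3 →+* ℚ) := by
    apply MvPolynomial.ringHom_ext
    · intro q
      simp [spec]
    · intro ij
      simp only [spec, RingHom.comp_apply, AlgHom.toRingHom_eq_coe, RingHom.coe_coe, aeval_X]
      split_ifs <;> simp
  exact congrArg (fun φ : JacR3 →+* ℚ => φ r) this

theorem spec_ideal (r : JacR3) (hr : r ∈ Jideal23) :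
    ∃ u v : Polynomial ℚ, spec cyc r = Polynomial.X ^ 6 * u ∧
      spec cyd r = Polynomial.X ^ 6 * v ∧ u.coeff 0 = v.coeff 0 := by
  unfold Jideal23 at hr
  induction hr using Submodule.span_induction with
  | mem x hx =>
    obtain ⟨α, hα, rfl⟩ := hx
    exact ⟨_, _, spec_gen _ (Or.inl rfl) α hα, spec_gen _ (Or.inr rfl) α hα, rfl⟩
  | zero => exact ⟨0, 0, by simp, by simp, rfl⟩
  | add x y _ _ hx hy =>
    obtain ⟨u, v, h1, h2, h3⟩ := hx
    obtain ⟨u', v', h1', h2', h3'⟩ := hy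
    refine ⟨u + u', v + v', ?_, ?_, ?_⟩
    · rw [map_add, h1, h1', mul_add]
    · rw [map_add, h2, h2', mul_add]
    · rw [Polynomial.coeff_add, Polynomial.coeff_add, h3, h3']
  | smul s x _ hx =>
    obtain ⟨u, v, h1, h2, h3⟩ := hx
    refine ⟨spec cyc s * u, spec cyd s * v, ?_, ?_, ?_⟩
    · rw [smul_eq_mul, map_mul, h1]; ring
    · rw [smul_eq_mul, map_mul, h2]; ring
    · rw [Polynomial.mul_coeff_zero, Polynomial.mul_coeff_zero, h3, spec_coeff_zero,
        spec_coeff_zero]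

theorem zOne_not_mem : zOne ∉ Jideal23 := by
  intro h
  obtain ⟨u, v, h1, h2, h3⟩ := spec_ideal _ h
  have e0 : cyc 0 = 1 := by decide
  have e1 : cyc 1 = 2 := by decide
  have e2 : cyc 2 = 0 := by decide
  have f0 : cyd 0 = 2 := by decide
  have f1 : cyd 1 = 0 := by decide
  have f2 : cyd 2 = 1 := by decide
  have z1 : spec cyc zOne = Polynomial.X ^ 6 * 1 := by
    simp [zOne, Fin.sum_univ_three, spec, e0, e1, e2]
    ring
  have z2 : spec cyd zOne = Polynomial.X ^ 6 * 0 := by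
    simp [zOne, Fin.sum_univ_three, spec, f0, f1, f2]
  have hX : (Polynomial.X ^ 6 : Polynomial ℚ) ≠ 0 := pow_ne_zero _ Polynomial.X_ne_zero
  have hu : u = 1 := mul_left_cancel₀ hX (h1.symm.trans z1)
  have hv : v = 0 := mul_left_cancel₀ hX (h2.symm.trans z2)
  rw [hu, hv] at h3
  simp at h3

/-- `z₁² ∈ J_{2,3}`; in particular `z₁` lies in the radical of `J_{2,3}`
but not in `J_{2,3}` itself. -/
theorem stmt14 : zOne ^ 2 ∈ Jideal23 ∧ zOne ∈ Jideal23.radical ∧ zOne ∉ Jideal23 := by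
  exact ⟨zOne_sq_mem, ⟨2, zOne_sq_mem⟩, zOne_not_mem⟩
end
end

section
/- Let n = 3 and d = 3, and set w₁ = a_{1,2}² · Σ_{m=1}^{3} Σ_{p=1}^{3} a_{1,m} a_{m,3}² a_{m,p} a_{p,1}³ and w₂ = a_{1,3}² · Σ_{m=1}^{3} Σ_{p=1}^{3} a_{1,m} a_{m,2}² a_{m,p} a_{p,1}³ in R (these are z(fern_{3,3}, μ) for the root-leaf labelings μ = (1,(2,2),(3,3),(1,1,1)) and μ = (1,(3,3),(2,2),(1,1,1)) respectively). Then w₁ ∉ J_{3,3} and w₂ ∉ J_{3,3}, but w₁ + w₂ ∈ J_{3,3}. -/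
open MvPolynomial Matrix

noncomputable section

/-- The `i`-th component of the degree `3`-linear map on 3 variables:
`f_i = x_i - (∑_j a_{i,j} x_j)³`. -/
def degLinMap33 (i : Fin 3) : MvPolynomial (Fin 3) JacR3 :=
  X i - (∑ j : Fin 3, C (X (i, j) : JacR3) * X j) ^ 3

/-- The Jacobian `Jac(f) = det(D(f))` with `(D(f))_{i,j} = ∂f_i/∂x_j`. -/
def jacPoly33 : MvPolynomial (Fin 3) JacR3 :=
  (Matrix.of fun i j : Fin 3 => pderiv j (degLinMap33 i)).det

/-- The ideal `J_{3,3}` generated by the coefficients `J_α` of `Jac(f)` for all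
nonzero multi-degrees `α`. -/
def Jideal33 : Ideal JacR3 :=
  Ideal.span {r : JacR3 | ∃ α : Fin 3 →₀ ℕ, α ≠ 0 ∧ coeff α jacPoly33 = r}

/-- `w₁ = a_{1,2}² ∑_{m,p} a_{1,m} a_{m,3}² a_{m,p} a_{p,1}³`, i.e.
`z(fern_{3,3}, (1,(2,2),(3,3),(1,1,1)))`.  (Indices `1,2,3` are `0,1,2 : Fin 3`.) -/
def wOne : JacR3 :=
  (X (0, 1) : JacR3) ^ 2 *
    ∑ m : Fin 3, ∑ p : Fin 3, X (0, m) * X (m, 2) ^ 2 * X (m, p) * X (p, 0) ^ 3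

/-- `w₂ = a_{1,3}² ∑_{m,p} a_{1,m} a_{m,2}² a_{m,p} a_{p,1}³`, i.e.
`z(fern_{3,3}, (1,(3,3),(2,2),(1,1,1)))`. -/
def wTwo : JacR3 :=
  (X (0, 2) : JacR3) ^ 2 *
    ∑ m : Fin 3, ∑ p : Fin 3, X (0, m) * X (m, 1) ^ 2 * X (m, p) * X (p, 0) ^ 3

set_option linter.unusedVariables false
set_option linter.style.longLine false

/-- Coefficient polynomial. -/
def g200 {S : Type*} [CommRing S] (a b c d e f g h i : S) : S :=
  a^3 + d^2*e + g^2*i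

/-- Coefficient polynomial. -/
def g110 {S : Type*} [CommRing S] (a b c d e f g h i : S) : S :=
  2*a^2*b + 2*d*e^2 + 2*g*h*i

/-- Coefficient polynomial. -/
def g101 {S : Type*} [CommRing S] (a b c d e f g h i : S) : S :=
  2*a^2*c + 2*d*e*f + 2*g*i^2

/-- Coefficient polynomial. -/
def g020 {S : Type*} [CommRing S] (a b c d e f g h i : S) : S :=
  a*b^2 + e^3 + h^2*i

/-- Coefficient polynomial. -/
def g011 {S : Type*} [CommRing S] (a b c d e f g h i : S) : S :=
  2*a*b*c + 2*e^2*f + 2*h*i^2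

/-- Coefficient polynomial. -/
def g002 {S : Type*} [CommRing S] (a b c d e f g h i : S) : S :=
  a*c^2 + e*f^2 + i^3

/-- Coefficient polynomial. -/
def g400 {S : Type*} [CommRing S] (a b c d e f g h i : S) : S :=
  a^3*d^2*e + a^3*g^2*i - a^2*b*d^3 - a^2*c*g^3 + d^2*e*g^2*i - d^2*f*g^2*h

/-- Coefficient polynomial. -/
def g310 {S : Type*} [CommRing S] (a b c d e f g h i : S) : S :=
  2*a^3*d*e^2 + 2*a^3*g*h*i + 2*a^2*b*g^2*i - 2*a^2*c*g^2*h - 2*a*b^2*d^3 - 2*a*b*c*g^3 +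
      2*d^2*e*g*h*i - 2*d^2*f*g*h^2 + 2*d*e^2*g^2*i - 2*d*e*f*g^2*h

/-- Coefficient polynomial. -/
def g301 {S : Type*} [CommRing S] (a b c d e f g h i : S) : S :=
  2*a^3*d*e*f + 2*a^3*g*i^2 - 2*a^2*b*d^2*f + 2*a^2*c*d^2*e - 2*a*b*c*d^3 - 2*a*c^2*g^3 +
      2*d^2*e*g*i^2 - 2*d^2*f*g*h*i + 2*d*e*f*g^2*i - 2*d*f^2*g^2*h

/-- Coefficient polynomial. -/
def g220 {S : Type*} [CommRing S] (a b c d e f g h i : S) : S :=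
  a^3*e^3 + a^3*h^2*i + 3*a^2*b*d*e^2 + 4*a^2*b*g*h*i - a^2*c*g*h^2 - 3*a*b^2*d^2*e + a*b^2*g^2*i -
      4*a*b*c*g^2*h - b^3*d^3 - b^2*c*g^3 + d^2*e*h^2*i - d^2*f*h^3 + 4*d*e^2*g*h*i -
      4*d*e*f*g*h^2 + e^3*g^2*i - e^2*f*g^2*h

/-- Coefficient polynomial. -/
def g211 {S : Type*} [CommRing S] (a b c d e f g h i : S) : S :=
  2*a^3*e^2*f + 2*a^3*h*i^2 + 2*a^2*b*d*e*f + 4*a^2*b*g*i^2 + 4*a^2*c*d*e^2 + 2*a^2*c*g*h*i -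
      4*a*b^2*d^2*f - 2*a*b*c*d^2*e - 2*a*b*c*g^2*i - 4*a*c^2*g^2*h - 2*b^2*c*d^3 - 2*b*c^2*g^3 +
      2*d^2*e*h*i^2 - 2*d^2*f*h^2*i + 4*d*e^2*g*i^2 - 4*d*f^2*g*h^2 + 2*e^2*f*g^2*i -
      2*e*f^2*g^2*h

/-- Coefficient polynomial. -/
def g202 {S : Type*} [CommRing S] (a b c d e f g h i : S) : S :=
  a^3*e*f^2 + a^3*i^3 - a^2*b*d*f^2 + 4*a^2*c*d*e*f + 3*a^2*c*g*i^2 - 4*a*b*c*d^2*f + a*c^2*d^2*e -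
      3*a*c^2*g^2*i - b*c^2*d^3 - c^3*g^3 + d^2*e*i^3 - d^2*f*h*i^2 + 4*d*e*f*g*i^2 -
      4*d*f^2*g*h*i + e*f^2*g^2*i - f^3*g^2*h

/-- Coefficient polynomial. -/
def g130 {S : Type*} [CommRing S] (a b c d e f g h i : S) : S :=
  2*a^2*b*e^3 + 2*a^2*b*h^2*i + 2*a*b^2*g*h*i - 2*a*b*c*g*h^2 - 2*b^3*d^2*e - 2*b^2*c*g^2*h +
      2*d*e^2*h^2*i - 2*d*e*f*h^3 + 2*e^3*g*h*i - 2*e^2*f*g*h^2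

/-- Coefficient polynomial. -/
def g121 {S : Type*} [CommRing S] (a b c d e f g h i : S) : S :=
  4*a^2*b*e^2*f + 4*a^2*b*h*i^2 + 2*a^2*c*e^3 + 2*a^2*c*h^2*i - 2*a*b^2*d*e*f + 2*a*b^2*g*i^2 +
      2*a*b*c*d*e^2 - 2*a*c^2*g*h^2 - 2*b^3*d^2*f - 4*b^2*c*d^2*e - 2*b^2*c*g^2*i - 4*b*c^2*g^2*h
      + 4*d*e^2*h*i^2 - 2*d*e*f*h^2*i - 2*d*f^2*h^3 + 2*e^3*g*i^2 + 2*e^2*f*g*h*i - 4*e*f^2*g*h^2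

/-- Coefficient polynomial. -/
def g112 {S : Type*} [CommRing S] (a b c d e f g h i : S) : S :=
  2*a^2*b*e*f^2 + 2*a^2*b*i^3 + 4*a^2*c*e^2*f + 4*a^2*c*h*i^2 - 2*a*b^2*d*f^2 + 2*a*b*c*g*i^2 +
      2*a*c^2*d*e^2 - 2*a*c^2*g*h*i - 4*b^2*c*d^2*f - 2*b*c^2*d^2*e - 4*b*c^2*g^2*i - 2*c^3*g^2*h
      + 2*d*e^2*i^3 + 2*d*e*f*h*i^2 - 4*d*f^2*h^2*i + 4*e^2*f*g*i^2 - 2*e*f^2*g*h*i - 2*f^3*g*h^2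

/-- Coefficient polynomial. -/
def g103 {S : Type*} [CommRing S] (a b c d e f g h i : S) : S :=
  2*a^2*c*e*f^2 + 2*a^2*c*i^3 - 2*a*b*c*d*f^2 + 2*a*c^2*d*e*f - 2*b*c^2*d^2*f - 2*c^3*g^2*i +
      2*d*e*f*i^3 - 2*d*f^2*h*i^2 + 2*e*f^2*g*i^2 - 2*f^3*g*h*i

/-- Coefficient polynomial. -/
def g040 {S : Type*} [CommRing S] (a b c d e f g h i : S) : S :=
  a*b^2*e^3 + a*b^2*h^2*i - b^3*d*e^2 - b^2*c*g*h^2 + e^3*h^2*i - e^2*f*h^3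

/-- Coefficient polynomial. -/
def g031 {S : Type*} [CommRing S] (a b c d e f g h i : S) : S :=
  2*a*b^2*e^2*f + 2*a*b^2*h*i^2 + 2*a*b*c*e^3 + 2*a*b*c*h^2*i - 2*b^3*d*e*f - 2*b^2*c*d*e^2 -
      2*b^2*c*g*h*i - 2*b*c^2*g*h^2 + 2*e^3*h*i^2 - 2*e*f^2*h^3

/-- Coefficient polynomial. -/
def g022 {S : Type*} [CommRing S] (a b c d e f g h i : S) : S :=
  a*b^2*e*f^2 + a*b^2*i^3 + 4*a*b*c*e^2*f + 4*a*b*c*h*i^2 + a*c^2*e^3 + a*c^2*h^2*i - b^3*d*f^2 -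
      4*b^2*c*d*e*f - b^2*c*g*i^2 - b*c^2*d*e^2 - 4*b*c^2*g*h*i - c^3*g*h^2 + e^3*i^3 +
      3*e^2*f*h*i^2 - 3*e*f^2*h^2*i - f^3*h^3

/-- Coefficient polynomial. -/
def g013 {S : Type*} [CommRing S] (a b c d e f g h i : S) : S :=
  2*a*b*c*e*f^2 + 2*a*b*c*i^3 + 2*a*c^2*e^2*f + 2*a*c^2*h*i^2 - 2*b^2*c*d*f^2 - 2*b*c^2*d*e*f -
      2*b*c^2*g*i^2 - 2*c^3*g*h*i + 2*e^2*f*i^3 - 2*f^3*h^2*i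

/-- Coefficient polynomial. -/
def g004 {S : Type*} [CommRing S] (a b c d e f g h i : S) : S :=
  a*c^2*e*f^2 + a*c^2*i^3 - b*c^2*d*f^2 - c^3*g*i^2 + e*f^2*i^3 - f^3*h*i^2

/-- Coefficient polynomial. -/
def g600 {S : Type*} [CommRing S] (a b c d e f g h i : S) : S :=
  a^3*d^2*e*g^2*i - a^3*d^2*f*g^2*h - a^2*b*d^3*g^2*i + a^2*b*d^2*f*g^3 + a^2*c*d^3*g^2*h -
      a^2*c*d^2*e*g^3

/-- Coefficient polynomial. -/
def g510 {S : Type*} [CommRing S] (a b c d e f g h i : S) : S :=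
  2*a^3*d^2*e*g*h*i - 2*a^3*d^2*f*g*h^2 + 2*a^3*d*e^2*g^2*i - 2*a^3*d*e*f*g^2*h - 2*a^2*b*d^3*g*h*i
      + 2*a^2*b*d*e*f*g^3 + 2*a^2*c*d^3*g*h^2 - 2*a^2*c*d*e^2*g^3 - 2*a*b^2*d^3*g^2*i +
      2*a*b^2*d^2*f*g^3 + 2*a*b*c*d^3*g^2*h - 2*a*b*c*d^2*e*g^3

/-- Coefficient polynomial. -/
def g501 {S : Type*} [CommRing S] (a b c d e f g h i : S) : S :=
  2*a^3*d^2*e*g*i^2 - 2*a^3*d^2*f*g*h*i + 2*a^3*d*e*f*g^2*i - 2*a^3*d*f^2*g^2*h - 2*a^2*b*d^3*g*i^2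
      + 2*a^2*b*d*f^2*g^3 + 2*a^2*c*d^3*g*h*i - 2*a^2*c*d*e*f*g^3 - 2*a*b*c*d^3*g^2*i +
      2*a*b*c*d^2*f*g^3 + 2*a*c^2*d^3*g^2*h - 2*a*c^2*d^2*e*g^3

/-- Coefficient polynomial. -/
def g420 {S : Type*} [CommRing S] (a b c d e f g h i : S) : S :=
  a^3*d^2*e*h^2*i - a^3*d^2*f*h^3 + 4*a^3*d*e^2*g*h*i - 4*a^3*d*e*f*g*h^2 + a^3*e^3*g^2*i -
      a^3*e^2*f*g^2*h - a^2*b*d^3*h^2*i - 3*a^2*b*d^2*f*g*h^2 + 3*a^2*b*d*e^2*g^2*i +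
      a^2*b*e^2*f*g^3 + a^2*c*d^3*h^3 + 3*a^2*c*d^2*e*g*h^2 - 3*a^2*c*d*e^2*g^2*h - a^2*c*e^3*g^3
      - 4*a*b^2*d^3*g*h*i - 3*a*b^2*d^2*e*g^2*i + 3*a*b^2*d^2*f*g^2*h + 4*a*b^2*d*e*f*g^3 +
      4*a*b*c*d^3*g*h^2 - 4*a*b*c*d*e^2*g^3 - b^3*d^3*g^2*i + b^3*d^2*f*g^3 + b^2*c*d^3*g^2*h -
      b^2*c*d^2*e*g^3

/-- Coefficient polynomial. -/
def g411 {S : Type*} [CommRing S] (a b c d e f g h i : S) : S :=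
  2*a^3*d^2*e*h*i^2 - 2*a^3*d^2*f*h^2*i + 4*a^3*d*e^2*g*i^2 - 4*a^3*d*f^2*g*h^2 + 2*a^3*e^2*f*g^2*i
      - 2*a^3*e*f^2*g^2*h - 2*a^2*b*d^3*h*i^2 - 6*a^2*b*d^2*f*g*h*i + 6*a^2*b*d*e*f*g^2*i +
      2*a^2*b*e*f^2*g^3 + 2*a^2*c*d^3*h^2*i + 6*a^2*c*d^2*e*g*h*i - 6*a^2*c*d*e*f*g^2*h -
      2*a^2*c*e^2*f*g^3 - 4*a*b^2*d^3*g*i^2 + 4*a*b^2*d*f^2*g^3 - 6*a*b*c*d^2*e*g^2*i +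
      6*a*b*c*d^2*f*g^2*h + 4*a*c^2*d^3*g*h^2 - 4*a*c^2*d*e^2*g^3 - 2*b^2*c*d^3*g^2*i +
      2*b^2*c*d^2*f*g^3 + 2*b*c^2*d^3*g^2*h - 2*b*c^2*d^2*e*g^3

/-- Coefficient polynomial. -/
def g402 {S : Type*} [CommRing S] (a b c d e f g h i : S) : S :=
  a^3*d^2*e*i^3 - a^3*d^2*f*h*i^2 + 4*a^3*d*e*f*g*i^2 - 4*a^3*d*f^2*g*h*i + a^3*e*f^2*g^2*i -
      a^3*f^3*g^2*h - a^2*b*d^3*i^3 - 3*a^2*b*d^2*f*g*i^2 + 3*a^2*b*d*f^2*g^2*i + a^2*b*f^3*g^3 +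
      a^2*c*d^3*h*i^2 + 3*a^2*c*d^2*e*g*i^2 - 3*a^2*c*d*f^2*g^2*h - a^2*c*e*f^2*g^3 -
      4*a*b*c*d^3*g*i^2 + 4*a*b*c*d*f^2*g^3 + 4*a*c^2*d^3*g*h*i - 3*a*c^2*d^2*e*g^2*i +
      3*a*c^2*d^2*f*g^2*h - 4*a*c^2*d*e*f*g^3 - b*c^2*d^3*g^2*i + b*c^2*d^2*f*g^3 + c^3*d^3*g^2*h
      - c^3*d^2*e*g^3

/-- Coefficient polynomial. -/
def g330 {S : Type*} [CommRing S] (a b c d e f g h i : S) : S :=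
  2*a^3*d*e^2*h^2*i - 2*a^3*d*e*f*h^3 + 2*a^3*e^3*g*h*i - 2*a^3*e^2*f*g*h^2 - 2*a^2*b*d^2*f*h^3 +
      6*a^2*b*d*e^2*g*h*i - 6*a^2*b*d*e*f*g*h^2 + 2*a^2*b*e^3*g^2*i + 2*a^2*c*d^2*e*h^3 -
      2*a^2*c*e^3*g^2*h - 2*a*b^2*d^3*h^2*i - 6*a*b^2*d^2*e*g*h*i + 6*a*b^2*d*e*f*g^2*h +
      2*a*b^2*e^2*f*g^3 + 2*a*b*c*d^3*h^3 + 6*a*b*c*d^2*e*g*h^2 - 6*a*b*c*d*e^2*g^2*h -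
      2*a*b*c*e^3*g^3 - 2*b^3*d^3*g*h*i - 2*b^3*d^2*e*g^2*i + 2*b^3*d^2*f*g^2*h + 2*b^3*d*e*f*g^3
      + 2*b^2*c*d^3*g*h^2 - 2*b^2*c*d*e^2*g^3

/-- Coefficient polynomial. -/
def g321 {S : Type*} [CommRing S] (a b c d e f g h i : S) : S :=
  4*a^3*d*e^2*h*i^2 - 2*a^3*d*e*f*h^2*i - 2*a^3*d*f^2*h^3 + 2*a^3*e^3*g*i^2 + 2*a^3*e^2*f*g*h*i -
      4*a^3*e*f^2*g*h^2 - 6*a^2*b*d^2*f*h^2*i + 6*a^2*b*d*e^2*g*i^2 - 6*a^2*b*d*f^2*g*h^2 +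
      6*a^2*b*e^2*f*g^2*i + 6*a^2*c*d^2*e*h^2*i + 6*a^2*c*d*e^2*g*h*i - 6*a^2*c*d*e*f*g*h^2 -
      6*a^2*c*e^2*f*g^2*h - 4*a*b^2*d^3*h*i^2 - 6*a*b^2*d^2*e*g*i^2 - 6*a*b^2*d^2*f*g*h*i +
      6*a*b^2*d*e*f*g^2*i + 6*a*b^2*d*f^2*g^2*h + 4*a*b^2*e*f^2*g^3 + 2*a*b*c*d^3*h^2*i +
      6*a*b*c*d^2*f*g*h^2 - 6*a*b*c*d*e^2*g^2*i - 2*a*b*c*e^2*f*g^3 + 2*a*c^2*d^3*h^3 +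
      6*a*c^2*d^2*e*g*h^2 - 6*a*c^2*d*e^2*g^2*h - 2*a*c^2*e^3*g^3 - 2*b^3*d^3*g*i^2 +
      2*b^3*d*f^2*g^3 - 2*b^2*c*d^3*g*h*i - 6*b^2*c*d^2*e*g^2*i + 6*b^2*c*d^2*f*g^2*h +
      2*b^2*c*d*e*f*g^3 + 4*b*c^2*d^3*g*h^2 - 4*b*c^2*d*e^2*g^3

/-- Coefficient polynomial. -/
def g312 {S : Type*} [CommRing S] (a b c d e f g h i : S) : S :=
  2*a^3*d*e^2*i^3 + 2*a^3*d*e*f*h*i^2 - 4*a^3*d*f^2*h^2*i + 4*a^3*e^2*f*g*i^2 - 2*a^3*e*f^2*g*h*i -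
      2*a^3*f^3*g*h^2 - 6*a^2*b*d^2*f*h*i^2 + 6*a^2*b*d*e*f*g*i^2 - 6*a^2*b*d*f^2*g*h*i +
      6*a^2*b*e*f^2*g^2*i + 6*a^2*c*d^2*e*h*i^2 + 6*a^2*c*d*e^2*g*i^2 - 6*a^2*c*d*f^2*g*h^2 -
      6*a^2*c*e*f^2*g^2*h - 2*a*b^2*d^3*i^3 - 6*a*b^2*d^2*f*g*i^2 + 6*a*b^2*d*f^2*g^2*i +
      2*a*b^2*f^3*g^3 - 2*a*b*c*d^3*h*i^2 - 6*a*b*c*d^2*e*g*i^2 + 6*a*b*c*d*f^2*g^2*h +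
      2*a*b*c*e*f^2*g^3 + 4*a*c^2*d^3*h^2*i + 6*a*c^2*d^2*e*g*h*i + 6*a*c^2*d^2*f*g*h^2 -
      6*a*c^2*d*e^2*g^2*i - 6*a*c^2*d*e*f*g^2*h - 4*a*c^2*e^2*f*g^3 - 4*b^2*c*d^3*g*i^2 +
      4*b^2*c*d*f^2*g^3 + 2*b*c^2*d^3*g*h*i - 6*b*c^2*d^2*e*g^2*i + 6*b*c^2*d^2*f*g^2*h -
      2*b*c^2*d*e*f*g^3 + 2*c^3*d^3*g*h^2 - 2*c^3*d*e^2*g^3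

/-- Coefficient polynomial. -/
def g303 {S : Type*} [CommRing S] (a b c d e f g h i : S) : S :=
  2*a^3*d*e*f*i^3 - 2*a^3*d*f^2*h*i^2 + 2*a^3*e*f^2*g*i^2 - 2*a^3*f^3*g*h*i - 2*a^2*b*d^2*f*i^3 +
      2*a^2*b*f^3*g^2*i + 2*a^2*c*d^2*e*i^3 + 6*a^2*c*d*e*f*g*i^2 - 6*a^2*c*d*f^2*g*h*i -
      2*a^2*c*f^3*g^2*h - 2*a*b*c*d^3*i^3 - 6*a*b*c*d^2*f*g*i^2 + 6*a*b*c*d*f^2*g^2*i +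
      2*a*b*c*f^3*g^3 + 2*a*c^2*d^3*h*i^2 + 6*a*c^2*d^2*f*g*h*i - 6*a*c^2*d*e*f*g^2*i -
      2*a*c^2*e*f^2*g^3 - 2*b*c^2*d^3*g*i^2 + 2*b*c^2*d*f^2*g^3 + 2*c^3*d^3*g*h*i -
      2*c^3*d^2*e*g^2*i + 2*c^3*d^2*f*g^2*h - 2*c^3*d*e*f*g^3

/-- Coefficient polynomial. -/
def g240 {S : Type*} [CommRing S] (a b c d e f g h i : S) : S :=
  a^3*e^3*h^2*i - a^3*e^2*f*h^3 + 3*a^2*b*d*e^2*h^2*i - 4*a^2*b*d*e*f*h^3 + 4*a^2*b*e^3*g*h*i -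
      3*a^2*b*e^2*f*g*h^2 + a^2*c*d*e^2*h^3 - a^2*c*e^3*g*h^2 - 3*a*b^2*d^2*e*h^2*i -
      a*b^2*d^2*f*h^3 + a*b^2*e^3*g^2*i + 3*a*b^2*e^2*f*g^2*h + 4*a*b*c*d^2*e*h^3 -
      4*a*b*c*e^3*g^2*h - b^3*d^3*h^2*i - 4*b^3*d^2*e*g*h*i + b^3*d^2*f*g*h^2 - b^3*d*e^2*g^2*i +
      4*b^3*d*e*f*g^2*h + b^3*e^2*f*g^3 + b^2*c*d^3*h^3 + 3*b^2*c*d^2*e*g*h^2 -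
      3*b^2*c*d*e^2*g^2*h - b^2*c*e^3*g^3

/-- Coefficient polynomial. -/
def g231 {S : Type*} [CommRing S] (a b c d e f g h i : S) : S :=
  2*a^3*e^3*h*i^2 - 2*a^3*e*f^2*h^3 + 6*a^2*b*d*e^2*h*i^2 - 6*a^2*b*d*e*f*h^2*i - 4*a^2*b*d*f^2*h^3
      + 4*a^2*b*e^3*g*i^2 + 6*a^2*b*e^2*f*g*h*i - 6*a^2*b*e*f^2*g*h^2 + 6*a^2*c*d*e^2*h^2*i -
      2*a^2*c*d*e*f*h^3 + 2*a^2*c*e^3*g*h*i - 6*a^2*c*e^2*f*g*h^2 - 6*a*b^2*d^2*e*h*i^2 -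
      6*a*b^2*d^2*f*h^2*i + 6*a*b^2*e^2*f*g^2*i + 6*a*b^2*e*f^2*g^2*h + 6*a*b*c*d^2*e*h^2*i +
      2*a*b*c*d^2*f*h^3 - 2*a*b*c*e^3*g^2*i - 6*a*b*c*e^2*f*g^2*h + 4*a*c^2*d^2*e*h^3 -
      4*a*c^2*e^3*g^2*h - 2*b^3*d^3*h*i^2 - 4*b^3*d^2*e*g*i^2 - 2*b^3*d^2*f*g*h*i +
      2*b^3*d*e*f*g^2*i + 4*b^3*d*f^2*g^2*h + 2*b^3*e*f^2*g^3 - 6*b^2*c*d^2*e*g*h*i +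
      6*b^2*c*d^2*f*g*h^2 - 6*b^2*c*d*e^2*g^2*i + 6*b^2*c*d*e*f*g^2*h + 2*b*c^2*d^3*h^3 +
      6*b*c^2*d^2*e*g*h^2 - 6*b*c^2*d*e^2*g^2*h - 2*b*c^2*e^3*g^3

/-- Coefficient polynomial. -/
def g222 {S : Type*} [CommRing S] (a b c d e f g h i : S) : S :=
  a^3*e^3*i^3 + 3*a^3*e^2*f*h*i^2 - 3*a^3*e*f^2*h^2*i - a^3*f^3*h^3 + 3*a^2*b*d*e^2*i^3 -
      9*a^2*b*d*f^2*h^2*i + 9*a^2*b*e^2*f*g*i^2 - 3*a^2*b*f^3*g*h^2 + 9*a^2*c*d*e^2*h*i^2 -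
      3*a^2*c*d*f^2*h^3 + 3*a^2*c*e^3*g*i^2 - 9*a^2*c*e*f^2*g*h^2 - 3*a*b^2*d^2*e*i^3 -
      9*a*b^2*d^2*f*h*i^2 + 9*a*b^2*e*f^2*g^2*i + 3*a*b^2*f^3*g^2*h + 9*a*c^2*d^2*e*h^2*i +
      3*a*c^2*d^2*f*h^3 - 3*a*c^2*e^3*g^2*i - 9*a*c^2*e^2*f*g^2*h - b^3*d^3*i^3 -
      3*b^3*d^2*f*g*i^2 + 3*b^3*d*f^2*g^2*i + b^3*f^3*g^3 - 3*b^2*c*d^3*h*i^2 -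
      9*b^2*c*d^2*e*g*i^2 + 9*b^2*c*d*f^2*g^2*h + 3*b^2*c*e*f^2*g^3 + 3*b*c^2*d^3*h^2*i +
      9*b*c^2*d^2*f*g*h^2 - 9*b*c^2*d*e^2*g^2*i - 3*b*c^2*e^2*f*g^3 + c^3*d^3*h^3 +
      3*c^3*d^2*e*g*h^2 - 3*c^3*d*e^2*g^2*h - c^3*e^3*g^3

/-- Coefficient polynomial. -/
def g213 {S : Type*} [CommRing S] (a b c d e f g h i : S) : S :=
  2*a^3*e^2*f*i^3 - 2*a^3*f^3*h^2*i + 2*a^2*b*d*e*f*i^3 - 6*a^2*b*d*f^2*h*i^2 + 6*a^2*b*e*f^2*g*i^2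
      - 2*a^2*b*f^3*g*h*i + 4*a^2*c*d*e^2*i^3 + 6*a^2*c*d*e*f*h*i^2 - 6*a^2*c*d*f^2*h^2*i +
      6*a^2*c*e^2*f*g*i^2 - 6*a^2*c*e*f^2*g*h*i - 4*a^2*c*f^3*g*h^2 - 4*a*b^2*d^2*f*i^3 +
      4*a*b^2*f^3*g^2*i - 2*a*b*c*d^2*e*i^3 - 6*a*b*c*d^2*f*h*i^2 + 6*a*b*c*e*f^2*g^2*i +
      2*a*b*c*f^3*g^2*h + 6*a*c^2*d^2*e*h*i^2 + 6*a*c^2*d^2*f*h^2*i - 6*a*c^2*e^2*f*g^2*i -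
      6*a*c^2*e*f^2*g^2*h - 2*b^2*c*d^3*i^3 - 6*b^2*c*d^2*f*g*i^2 + 6*b^2*c*d*f^2*g^2*i +
      2*b^2*c*f^3*g^3 - 6*b*c^2*d^2*e*g*i^2 + 6*b*c^2*d^2*f*g*h*i - 6*b*c^2*d*e*f*g^2*i +
      6*b*c^2*d*f^2*g^2*h + 2*c^3*d^3*h^2*i + 2*c^3*d^2*e*g*h*i + 4*c^3*d^2*f*g*h^2 -
      4*c^3*d*e^2*g^2*i - 2*c^3*d*e*f*g^2*h - 2*c^3*e^2*f*g^3

/-- Coefficient polynomial. -/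
def g204 {S : Type*} [CommRing S] (a b c d e f g h i : S) : S :=
  a^3*e*f^2*i^3 - a^3*f^3*h*i^2 - a^2*b*d*f^2*i^3 + a^2*b*f^3*g*i^2 + 4*a^2*c*d*e*f*i^3 -
      3*a^2*c*d*f^2*h*i^2 + 3*a^2*c*e*f^2*g*i^2 - 4*a^2*c*f^3*g*h*i - 4*a*b*c*d^2*f*i^3 +
      4*a*b*c*f^3*g^2*i + a*c^2*d^2*e*i^3 + 3*a*c^2*d^2*f*h*i^2 - 3*a*c^2*e*f^2*g^2*i -
      a*c^2*f^3*g^2*h - b*c^2*d^3*i^3 - 3*b*c^2*d^2*f*g*i^2 + 3*b*c^2*d*f^2*g^2*i + b*c^2*f^3*g^3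
      + c^3*d^3*h*i^2 - c^3*d^2*e*g*i^2 + 4*c^3*d^2*f*g*h*i - 4*c^3*d*e*f*g^2*i + c^3*d*f^2*g^2*h
      - c^3*e*f^2*g^3

/-- Coefficient polynomial. -/
def g150 {S : Type*} [CommRing S] (a b c d e f g h i : S) : S :=
  2*a^2*b*e^3*h^2*i - 2*a^2*b*e^2*f*h^3 - 2*a*b^2*d*e*f*h^3 + 2*a*b^2*e^3*g*h*i + 2*a*b*c*d*e^2*h^3
      - 2*a*b*c*e^3*g*h^2 - 2*b^3*d^2*e*h^2*i - 2*b^3*d*e^2*g*h*i + 2*b^3*d*e*f*g*h^2 +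
      2*b^3*e^2*f*g^2*h + 2*b^2*c*d^2*e*h^3 - 2*b^2*c*e^3*g^2*h

/-- Coefficient polynomial. -/
def g141 {S : Type*} [CommRing S] (a b c d e f g h i : S) : S :=
  4*a^2*b*e^3*h*i^2 - 4*a^2*b*e*f^2*h^3 + 2*a^2*c*e^3*h^2*i - 2*a^2*c*e^2*f*h^3 -
      6*a*b^2*d*e*f*h^2*i - 2*a*b^2*d*f^2*h^3 + 2*a*b^2*e^3*g*i^2 + 6*a*b^2*e^2*f*g*h*i +
      6*a*b*c*d*e^2*h^2*i - 6*a*b*c*e^2*f*g*h^2 + 2*a*c^2*d*e^2*h^3 - 2*a*c^2*e^3*g*h^2 -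
      4*b^3*d^2*e*h*i^2 - 2*b^3*d^2*f*h^2*i - 2*b^3*d*e^2*g*i^2 + 2*b^3*d*f^2*g*h^2 +
      2*b^3*e^2*f*g^2*i + 4*b^3*e*f^2*g^2*h + 2*b^2*c*d^2*f*h^3 - 6*b^2*c*d*e^2*g*h*i +
      6*b^2*c*d*e*f*g*h^2 - 2*b^2*c*e^3*g^2*i + 4*b*c^2*d^2*e*h^3 - 4*b*c^2*e^3*g^2*h

/-- Coefficient polynomial. -/
def g132 {S : Type*} [CommRing S] (a b c d e f g h i : S) : S :=
  2*a^2*b*e^3*i^3 + 6*a^2*b*e^2*f*h*i^2 - 6*a^2*b*e*f^2*h^2*i - 2*a^2*b*f^3*h^3 + 4*a^2*c*e^3*h*i^2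
      - 4*a^2*c*e*f^2*h^3 - 6*a*b^2*d*e*f*h*i^2 - 6*a*b^2*d*f^2*h^2*i + 6*a*b^2*e^2*f*g*i^2 +
      6*a*b^2*e*f^2*g*h*i + 6*a*b*c*d*e^2*h*i^2 - 2*a*b*c*d*f^2*h^3 + 2*a*b*c*e^3*g*i^2 -
      6*a*b*c*e*f^2*g*h^2 + 6*a*c^2*d*e^2*h^2*i + 2*a*c^2*d*e*f*h^3 - 2*a*c^2*e^3*g*h*i -
      6*a*c^2*e^2*f*g*h^2 - 2*b^3*d^2*e*i^3 - 4*b^3*d^2*f*h*i^2 - 2*b^3*d*e*f*g*i^2 +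
      2*b^3*d*f^2*g*h*i + 4*b^3*e*f^2*g^2*i + 2*b^3*f^3*g^2*h - 6*b^2*c*d^2*e*h*i^2 -
      6*b^2*c*d*e^2*g*i^2 + 6*b^2*c*d*f^2*g*h^2 + 6*b^2*c*e*f^2*g^2*h + 6*b*c^2*d^2*e*h^2*i +
      4*b*c^2*d^2*f*h^3 - 6*b*c^2*d*e^2*g*h*i + 6*b*c^2*d*e*f*g*h^2 - 4*b*c^2*e^3*g^2*i -
      6*b*c^2*e^2*f*g^2*h + 2*c^3*d^2*e*h^3 - 2*c^3*e^3*g^2*h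

/-- Coefficient polynomial. -/
def g123 {S : Type*} [CommRing S] (a b c d e f g h i : S) : S :=
  4*a^2*b*e^2*f*i^3 - 4*a^2*b*f^3*h^2*i + 2*a^2*c*e^3*i^3 + 6*a^2*c*e^2*f*h*i^2 -
      6*a^2*c*e*f^2*h^2*i - 2*a^2*c*f^3*h^3 - 2*a*b^2*d*e*f*i^3 - 6*a*b^2*d*f^2*h*i^2 +
      6*a*b^2*e*f^2*g*i^2 + 2*a*b^2*f^3*g*h*i + 2*a*b*c*d*e^2*i^3 - 6*a*b*c*d*f^2*h^2*i +
      6*a*b*c*e^2*f*g*i^2 - 2*a*b*c*f^3*g*h^2 + 6*a*c^2*d*e^2*h*i^2 + 6*a*c^2*d*e*f*h^2*i -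
      6*a*c^2*e^2*f*g*h*i - 6*a*c^2*e*f^2*g*h^2 - 2*b^3*d^2*f*i^3 + 2*b^3*f^3*g^2*i -
      4*b^2*c*d^2*e*i^3 - 6*b^2*c*d^2*f*h*i^2 - 6*b^2*c*d*e*f*g*i^2 + 6*b^2*c*d*f^2*g*h*i +
      6*b^2*c*e*f^2*g^2*i + 4*b^2*c*f^3*g^2*h + 6*b*c^2*d^2*f*h^2*i - 6*b*c^2*d*e^2*g*i^2 +
      6*b*c^2*d*f^2*g*h^2 - 6*b*c^2*e^2*f*g^2*i + 4*c^3*d^2*e*h^2*i + 2*c^3*d^2*f*h^3 -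
      2*c^3*d*e^2*g*h*i + 2*c^3*d*e*f*g*h^2 - 2*c^3*e^3*g^2*i - 4*c^3*e^2*f*g^2*h

/-- Coefficient polynomial. -/
def g114 {S : Type*} [CommRing S] (a b c d e f g h i : S) : S :=
  2*a^2*b*e*f^2*i^3 - 2*a^2*b*f^3*h*i^2 + 4*a^2*c*e^2*f*i^3 - 4*a^2*c*f^3*h^2*i - 2*a*b^2*d*f^2*i^3
      + 2*a*b^2*f^3*g*i^2 - 6*a*b*c*d*f^2*h*i^2 + 6*a*b*c*e*f^2*g*i^2 + 2*a*c^2*d*e^2*i^3 +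
      6*a*c^2*d*e*f*h*i^2 - 6*a*c^2*e*f^2*g*h*i - 2*a*c^2*f^3*g*h^2 - 4*b^2*c*d^2*f*i^3 +
      4*b^2*c*f^3*g^2*i - 2*b*c^2*d^2*e*i^3 - 6*b*c^2*d*e*f*g*i^2 + 6*b*c^2*d*f^2*g*h*i +
      2*b*c^2*f^3*g^2*h + 2*c^3*d^2*e*h*i^2 + 4*c^3*d^2*f*h^2*i - 2*c^3*d*e^2*g*i^2 +
      2*c^3*d*f^2*g*h^2 - 4*c^3*e^2*f*g^2*i - 2*c^3*e*f^2*g^2*h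

/-- Coefficient polynomial. -/
def g105 {S : Type*} [CommRing S] (a b c d e f g h i : S) : S :=
  2*a^2*c*e*f^2*i^3 - 2*a^2*c*f^3*h*i^2 - 2*a*b*c*d*f^2*i^3 + 2*a*b*c*f^3*g*i^2 + 2*a*c^2*d*e*f*i^3
      - 2*a*c^2*f^3*g*h*i - 2*b*c^2*d^2*f*i^3 + 2*b*c^2*f^3*g^2*i + 2*c^3*d^2*f*h*i^2 -
      2*c^3*d*e*f*g*i^2 + 2*c^3*d*f^2*g*h*i - 2*c^3*e*f^2*g^2*i

/-- Coefficient polynomial. -/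
def g060 {S : Type*} [CommRing S] (a b c d e f g h i : S) : S :=
  a*b^2*e^3*h^2*i - a*b^2*e^2*f*h^3 - b^3*d*e^2*h^2*i + b^3*e^2*f*g*h^2 + b^2*c*d*e^2*h^3 -
      b^2*c*e^3*g*h^2

/-- Coefficient polynomial. -/
def g051 {S : Type*} [CommRing S] (a b c d e f g h i : S) : S :=
  2*a*b^2*e^3*h*i^2 - 2*a*b^2*e*f^2*h^3 + 2*a*b*c*e^3*h^2*i - 2*a*b*c*e^2*f*h^3 - 2*b^3*d*e^2*h*i^2
      - 2*b^3*d*e*f*h^2*i + 2*b^3*e^2*f*g*h*i + 2*b^3*e*f^2*g*h^2 + 2*b^2*c*d*e*f*h^3 -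
      2*b^2*c*e^3*g*h*i + 2*b*c^2*d*e^2*h^3 - 2*b*c^2*e^3*g*h^2

/-- Coefficient polynomial. -/
def g042 {S : Type*} [CommRing S] (a b c d e f g h i : S) : S :=
  a*b^2*e^3*i^3 + 3*a*b^2*e^2*f*h*i^2 - 3*a*b^2*e*f^2*h^2*i - a*b^2*f^3*h^3 + 4*a*b*c*e^3*h*i^2 -
      4*a*b*c*e*f^2*h^3 + a*c^2*e^3*h^2*i - a*c^2*e^2*f*h^3 - b^3*d*e^2*i^3 - 4*b^3*d*e*f*h*i^2 -
      b^3*d*f^2*h^2*i + b^3*e^2*f*g*i^2 + 4*b^3*e*f^2*g*h*i + b^3*f^3*g*h^2 - 3*b^2*c*d*e^2*h*i^2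
      + b^2*c*d*f^2*h^3 - b^2*c*e^3*g*i^2 + 3*b^2*c*e*f^2*g*h^2 + 3*b*c^2*d*e^2*h^2*i +
      4*b*c^2*d*e*f*h^3 - 4*b*c^2*e^3*g*h*i - 3*b*c^2*e^2*f*g*h^2 + c^3*d*e^2*h^3 - c^3*e^3*g*h^2

/-- Coefficient polynomial. -/
def g033 {S : Type*} [CommRing S] (a b c d e f g h i : S) : S :=
  2*a*b^2*e^2*f*i^3 - 2*a*b^2*f^3*h^2*i + 2*a*b*c*e^3*i^3 + 6*a*b*c*e^2*f*h*i^2 -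
      6*a*b*c*e*f^2*h^2*i - 2*a*b*c*f^3*h^3 + 2*a*c^2*e^3*h*i^2 - 2*a*c^2*e*f^2*h^3 -
      2*b^3*d*e*f*i^3 - 2*b^3*d*f^2*h*i^2 + 2*b^3*e*f^2*g*i^2 + 2*b^3*f^3*g*h*i -
      2*b^2*c*d*e^2*i^3 - 6*b^2*c*d*e*f*h*i^2 + 6*b^2*c*e*f^2*g*h*i + 2*b^2*c*f^3*g*h^2 +
      6*b*c^2*d*e*f*h^2*i + 2*b*c^2*d*f^2*h^3 - 2*b*c^2*e^3*g*i^2 - 6*b*c^2*e^2*f*g*h*i +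
      2*c^3*d*e^2*h^2*i + 2*c^3*d*e*f*h^3 - 2*c^3*e^3*g*h*i - 2*c^3*e^2*f*g*h^2

/-- Coefficient polynomial. -/
def g024 {S : Type*} [CommRing S] (a b c d e f g h i : S) : S :=
  a*b^2*e*f^2*i^3 - a*b^2*f^3*h*i^2 + 4*a*b*c*e^2*f*i^3 - 4*a*b*c*f^3*h^2*i + a*c^2*e^3*i^3 +
      3*a*c^2*e^2*f*h*i^2 - 3*a*c^2*e*f^2*h^2*i - a*c^2*f^3*h^3 - b^3*d*f^2*i^3 + b^3*f^3*g*i^2 -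
      4*b^2*c*d*e*f*i^3 - 3*b^2*c*d*f^2*h*i^2 + 3*b^2*c*e*f^2*g*i^2 + 4*b^2*c*f^3*g*h*i -
      b*c^2*d*e^2*i^3 + 3*b*c^2*d*f^2*h^2*i - 3*b*c^2*e^2*f*g*i^2 + b*c^2*f^3*g*h^2 +
      c^3*d*e^2*h*i^2 + 4*c^3*d*e*f*h^2*i + c^3*d*f^2*h^3 - c^3*e^3*g*i^2 - 4*c^3*e^2*f*g*h*i -
      c^3*e*f^2*g*h^2

/-- Coefficient polynomial. -/
def g015 {S : Type*} [CommRing S] (a b c d e f g h i : S) : S :=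
  2*a*b*c*e*f^2*i^3 - 2*a*b*c*f^3*h*i^2 + 2*a*c^2*e^2*f*i^3 - 2*a*c^2*f^3*h^2*i - 2*b^2*c*d*f^2*i^3
      + 2*b^2*c*f^3*g*i^2 - 2*b*c^2*d*e*f*i^3 + 2*b*c^2*f^3*g*h*i + 2*c^3*d*e*f*h*i^2 +
      2*c^3*d*f^2*h^2*i - 2*c^3*e^2*f*g*i^2 - 2*c^3*e*f^2*g*h*i

/-- Coefficient polynomial. -/
def g006 {S : Type*} [CommRing S] (a b c d e f g h i : S) : S :=
  a*c^2*e*f^2*i^3 - a*c^2*f^3*h*i^2 - b*c^2*d*f^2*i^3 + b*c^2*f^3*g*i^2 + c^3*d*f^2*h*i^2 -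
      c^3*e*f^2*g*i^2

set_option maxHeartbeats 4000000 in
theorem expand2 {S : Type*} [CommRing S] (a b c d e f g h i x y z : S) :
    (a*x+b*y+c*z)^2*a + (d*x+e*y+f*z)^2*e + (g*x+h*y+i*z)^2*i =
    g200 a b c d e f g h i * x ^ 2 * y ^ 0 * z ^ 0 +
    g110 a b c d e f g h i * x ^ 1 * y ^ 1 * z ^ 0 +
    g101 a b c d e f g h i * x ^ 1 * y ^ 0 * z ^ 1 +
    g020 a b c d e f g h i * x ^ 0 * y ^ 2 * z ^ 0 +
    g011 a b c d e f g h i * x ^ 0 * y ^ 1 * z ^ 1 +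
    g002 a b c d e f g h i * x ^ 0 * y ^ 0 * z ^ 2 := by
  simp only [g200, g110, g101, g020, g011, g002]
  ring

set_option maxHeartbeats 4000000 in
theorem expand4 {S : Type*} [CommRing S] (a b c d e f g h i x y z : S) :
    (a*x+b*y+c*z)^2*(d*x+e*y+f*z)^2*(a*e-b*d) + (a*x+b*y+c*z)^2*(g*x+h*y+i*z)^2*(a*i-c*g) +
    (d*x+e*y+f*z)^2*(g*x+h*y+i*z)^2*(e*i-f*h) =
    g400 a b c d e f g h i * x ^ 4 * y ^ 0 * z ^ 0 +
    g310 a b c d e f g h i * x ^ 3 * y ^ 1 * z ^ 0 +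
    g301 a b c d e f g h i * x ^ 3 * y ^ 0 * z ^ 1 +
    g220 a b c d e f g h i * x ^ 2 * y ^ 2 * z ^ 0 +
    g211 a b c d e f g h i * x ^ 2 * y ^ 1 * z ^ 1 +
    g202 a b c d e f g h i * x ^ 2 * y ^ 0 * z ^ 2 +
    g130 a b c d e f g h i * x ^ 1 * y ^ 3 * z ^ 0 +
    g121 a b c d e f g h i * x ^ 1 * y ^ 2 * z ^ 1 +
    g112 a b c d e f g h i * x ^ 1 * y ^ 1 * z ^ 2 +
    g103 a b c d e f g h i * x ^ 1 * y ^ 0 * z ^ 3 +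
    g040 a b c d e f g h i * x ^ 0 * y ^ 4 * z ^ 0 +
    g031 a b c d e f g h i * x ^ 0 * y ^ 3 * z ^ 1 +
    g022 a b c d e f g h i * x ^ 0 * y ^ 2 * z ^ 2 +
    g013 a b c d e f g h i * x ^ 0 * y ^ 1 * z ^ 3 +
    g004 a b c d e f g h i * x ^ 0 * y ^ 0 * z ^ 4 := by
  simp only [g400, g310, g301, g220, g211, g202, g130, g121, g112, g103, g040, g031, g022, g013, g004]
  ring

set_option maxHeartbeats 4000000 in
theorem expand6 {S : Type*} [CommRing S] (a b c d e f g h i x y z : S) :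
    (a*x+b*y+c*z)^2*(d*x+e*y+f*z)^2*(g*x+h*y+i*z)^2*
    (a*e*i - a*f*h - b*d*i + b*f*g + c*d*h - c*e*g) =
    g600 a b c d e f g h i * x ^ 6 * y ^ 0 * z ^ 0 +
    g510 a b c d e f g h i * x ^ 5 * y ^ 1 * z ^ 0 +
    g501 a b c d e f g h i * x ^ 5 * y ^ 0 * z ^ 1 +
    g420 a b c d e f g h i * x ^ 4 * y ^ 2 * z ^ 0 +
    g411 a b c d e f g h i * x ^ 4 * y ^ 1 * z ^ 1 +
    g402 a b c d e f g h i * x ^ 4 * y ^ 0 * z ^ 2 +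
    g330 a b c d e f g h i * x ^ 3 * y ^ 3 * z ^ 0 +
    g321 a b c d e f g h i * x ^ 3 * y ^ 2 * z ^ 1 +
    g312 a b c d e f g h i * x ^ 3 * y ^ 1 * z ^ 2 +
    g303 a b c d e f g h i * x ^ 3 * y ^ 0 * z ^ 3 +
    g240 a b c d e f g h i * x ^ 2 * y ^ 4 * z ^ 0 +
    g231 a b c d e f g h i * x ^ 2 * y ^ 3 * z ^ 1 +
    g222 a b c d e f g h i * x ^ 2 * y ^ 2 * z ^ 2 +
    g213 a b c d e f g h i * x ^ 2 * y ^ 1 * z ^ 3 +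
    g204 a b c d e f g h i * x ^ 2 * y ^ 0 * z ^ 4 +
    g150 a b c d e f g h i * x ^ 1 * y ^ 5 * z ^ 0 +
    g141 a b c d e f g h i * x ^ 1 * y ^ 4 * z ^ 1 +
    g132 a b c d e f g h i * x ^ 1 * y ^ 3 * z ^ 2 +
    g123 a b c d e f g h i * x ^ 1 * y ^ 2 * z ^ 3 +
    g114 a b c d e f g h i * x ^ 1 * y ^ 1 * z ^ 4 +
    g105 a b c d e f g h i * x ^ 1 * y ^ 0 * z ^ 5 +
    g060 a b c d e f g h i * x ^ 0 * y ^ 6 * z ^ 0 +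
    g051 a b c d e f g h i * x ^ 0 * y ^ 5 * z ^ 1 +
    g042 a b c d e f g h i * x ^ 0 * y ^ 4 * z ^ 2 +
    g033 a b c d e f g h i * x ^ 0 * y ^ 3 * z ^ 3 +
    g024 a b c d e f g h i * x ^ 0 * y ^ 2 * z ^ 4 +
    g015 a b c d e f g h i * x ^ 0 * y ^ 1 * z ^ 5 +
    g006 a b c d e f g h i * x ^ 0 * y ^ 0 * z ^ 6 := by
  simp only [g600, g510, g501, g420, g411, g402, g330, g321, g312, g303, g240, g231, g222, g213, g204, g150, g141, g132, g123, g114, g105, g060, g051, g042, g033, g024, g015, g006]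
  ring

set_option maxHeartbeats 4000000 in
/-- The certificate for membership (doubled). -/
theorem cert {S : Type*} [CommRing S] (a b c d e f g h i : S) :
    2*(b^2*((a*c^2*a*a^3 + a*c^2*b*d^3 + a*c^2*c*g^3) + (b*f^2*d*a^3 + b*f^2*e*d^3 + b*f^2*f*g^3) + (c*i^2*g*a^3 + c*i^2*h*d^3 + c*i^2*i*g^3)) +
      c^2*((a*b^2*a*a^3 + a*b^2*b*d^3 + a*b^2*c*g^3) + (b*e^2*d*a^3 + b*e^2*e*d^3 + b*e^2*f*g^3) + (c*h^2*g*a^3 + c*h^2*h*d^3 + c*h^2*i*g^3))) =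
    (- 38*a^2*b^2*c^2 + 56*a*b^2*e*f^2 + 16*a*b^2*i^3 + 40*a*b*c*h*i^2 - 16*b^3*d*f^2 - 58*b^2*c*d*e*f
      - 2*b^2*c*g*i^2 - 2*b*c^2*d*e^2 - 58*b*c^2*g*h*i - 16*c^3*g*h^2 - 48*e^3*i^3 +
      46*e^2*f*h*i^2 + 2*f^3*h^3) * g200 a b c d e f g h i +
    (- 4*a^3*b*c^2 + 23*a^2*b*i^3 + 43*a^2*c*e^2*f - 61*a*b^2*d*f^2 - 52*a*b*c*g*i^2 + 9*a*c^2*d*e^2 -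
      9*b^2*c*d^2*f + 5*b*c^2*g^2*i + 3*c^3*g^2*h + 29*d*e^2*i^3 + 24*d*e*f*h*i^2 -
      67*d*f^2*h^2*i - 3*f^3*g*h^2 - 17*g*h*i^4) * g110 a b c d e f g h i +
    (66*a^3*b^2*c + 3*a^2*b*e^2*f + 3*a^2*c*e^3 + 26*a^2*c*h^2*i - 43*a*b^2*d*e*f + 95*a*b*c*d*e^2 +
      35*a*c^2*g*h^2 + 3*b^3*d^2*f + 5*b^2*c*d^2*e - 9*b*c^2*g^2*h + 40*d*e^2*h*i^2 -
      23*d*e*f*h^2*i - 3*d*f^2*h^3 - 43*e^2*f*g*h*i + 29*e*f^2*g*h^2) * g101 a b c d e f g h i +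
    (- 40*a^4*c^2 + 6*a^3*e*f^2 + 128*a^2*b*d*f^2 - 24*a*b*c*d^2*f - 8*a*c^2*d^2*e + 16*a*c^2*g^2*i -
      6*b*c^2*d^3 + 2*c^3*g^3 + 126*d^2*e^2*f^2 + 104*d*e*f*g*i^2 + 104*d*f^2*g*h*i - 6*f^3*g^2*h
      + 58*g^2*i^4) * g020 a b c d e f g h i +
    (4*a^4*b*c - 26*a^3*e^2*f - 37*a^2*c*d*e^2 + 24*a^2*c*g*h*i + 20*a*b*c*g^2*i - 3*a*c^2*g^2*h +
      4*b^2*c*d^3 + 4*b*c^2*g^3 - 63*d^2*e^3*f + 3*d^2*f*h^2*i - 43*d*e^2*g*i^2 + 41*g^2*h*i^3) * g011 a b c d e f g h i +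
    (- 50*a^4*b^2 + 46*a^3*e^3 - 98*a^2*b*d*e^2 + 6*a^2*b*g*h*i - 64*a^2*c*g*h^2 - 64*a*b^2*g^2*i -
      18*a*b*c*g^2*h + 2*b^3*d^3 - 6*b^2*c*g^3 - 6*d^2*f*h^3 - 88*d*e*f*g*h^2 + 6*e^2*f*g^2*h -
      106*g^2*h^2*i^2) * g002 a b c d e f g h i +
    (- 6*a^2*c - 9*d*e*f) * g121 a b c d e f g h i +
    (- 6*a^2*b - 9*g*h*i) * g112 a b c d e f g h i +
    (9*d^2*f) * g031 a b c d e f g h i +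
    (- 10*d^2*e - 10*g^2*i) * g022 a b c d e f g h i +
    (9*g^2*h) * g013 a b c d e f g h i +
    (2) * g222 a b c d e f g h i := by
  simp only [g200, g110, g101, g020, g011, g002, g121, g112, g031, g022, g013, g222]
  ring

/-- The multi-degree `(i, j, k)`. -/
def mdeg (i j k : ℕ) : Fin 3 →₀ ℕ :=
  Finsupp.single 0 i + Finsupp.single 1 j + Finsupp.single 2 k

theorem mdeg_inj (i j k u v w : ℕ) :
    mdeg i j k = mdeg u v w ↔ i = u ∧ j = v ∧ k = w := by
  constructor
  · intro h
    have h0 := DFunLike.congr_fun h 0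
    have h1 := DFunLike.congr_fun h 1
    have h2 := DFunLike.congr_fun h 2
    simp [mdeg] at h0 h1 h2
    exact ⟨h0, h1, h2⟩
  · rintro ⟨rfl, rfl, rfl⟩
    rfl

theorem coeff_term {S : Type*} [CommRing S] (r : S) (i j k u v w : ℕ) :
    coeff (mdeg i j k) (C r * X 0 ^ u * X 1 ^ v * X 2 ^ w : MvPolynomial (Fin 3) S) =
      if u = i ∧ v = j ∧ w = k then r else 0 := by
  have : (C r * X 0 ^ u * X 1 ^ v * X 2 ^ w : MvPolynomial (Fin 3) S) =
      monomial (mdeg u v w) r := by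
    rw [mdeg, X_pow_eq_monomial, X_pow_eq_monomial, X_pow_eq_monomial, C_mul_monomial,
      monomial_mul, monomial_mul]
    simp
  rw [this, coeff_monomial]
  simp only [mdeg_inj]

/-- The Jacobian in terms of principal minors, for generic entries. -/
theorem jac_generic {S : Type*} [CommRing S] (a b c d e f g h i x y z : S) :
    (1 - 3*(a*x+b*y+c*z)^2*a) * (1 - 3*(d*x+e*y+f*z)^2*e) * (1 - 3*(g*x+h*y+i*z)^2*i)
    - (1 - 3*(a*x+b*y+c*z)^2*a) * (- (3*(d*x+e*y+f*z)^2*f)) * (- (3*(g*x+h*y+i*z)^2*h))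
    - (- (3*(a*x+b*y+c*z)^2*b)) * (- (3*(d*x+e*y+f*z)^2*d)) * (1 - 3*(g*x+h*y+i*z)^2*i)
    + (- (3*(a*x+b*y+c*z)^2*b)) * (- (3*(d*x+e*y+f*z)^2*f)) * (- (3*(g*x+h*y+i*z)^2*g))
    + (- (3*(a*x+b*y+c*z)^2*c)) * (- (3*(d*x+e*y+f*z)^2*d)) * (- (3*(g*x+h*y+i*z)^2*h))
    - (- (3*(a*x+b*y+c*z)^2*c)) * (1 - 3*(d*x+e*y+f*z)^2*e) * (- (3*(g*x+h*y+i*z)^2*g))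
    = 1 - 3 * ((a*x+b*y+c*z)^2*a + (d*x+e*y+f*z)^2*e + (g*x+h*y+i*z)^2*i)
    + 9 * ((a*x+b*y+c*z)^2*(d*x+e*y+f*z)^2*(a*e-b*d) + (a*x+b*y+c*z)^2*(g*x+h*y+i*z)^2*(a*i-c*g) +
    (d*x+e*y+f*z)^2*(g*x+h*y+i*z)^2*(e*i-f*h))
    - 27 * ((a*x+b*y+c*z)^2*(d*x+e*y+f*z)^2*(g*x+h*y+i*z)^2*
    (a*e*i - a*f*h - b*d*i + b*f*g + c*d*h - c*e*g)) := by
  generalize a*x+b*y+c*z = l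
  generalize d*x+e*y+f*z = m
  generalize g*x+h*y+i*z = n
  ring

theorem pderiv_deg (i j : Fin 3) : pderiv j (degLinMap33 i) =
    (if i = j then 1 else 0) - 3 * (C (X (i, 0)) * X 0 + C (X (i, 1)) * X 1 + C (X (i, 2)) * X 2)^2
      * C (X (i, j)) := by
  rw [degLinMap33, Fin.sum_univ_three, map_sub, Derivation.leibniz_pow]
  have : pderiv j (C (X (i, 0) : JacR3) * X (0 : Fin 3) + C (X (i, 1)) * X 1 + C (X (i, 2)) * X 2)
      = C (X (i, j)) := by
    simp only [map_add, pderiv_C_mul, pderiv_X]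
    fin_cases j <;> simp
  rw [this, pderiv_X]
  simp only [Pi.single_apply, nsmul_eq_mul, smul_eq_mul]
  push_cast
  rw [if_congr (eq_comm) rfl rfl]
  ring

/-- Generic form of the Jacobian as a polynomial in the nine entries and three variables. -/
def jacForm {S : Type*} [CommRing S] (a b c d e f g h i x y z : S) : S :=
    1 - 3 * ((a*x+b*y+c*z)^2*a + (d*x+e*y+f*z)^2*e + (g*x+h*y+i*z)^2*i)
    + 9 * ((a*x+b*y+c*z)^2*(d*x+e*y+f*z)^2*(a*e-b*d) + (a*x+b*y+c*z)^2*(g*x+h*y+i*z)^2*(a*i-c*g) +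
    (d*x+e*y+f*z)^2*(g*x+h*y+i*z)^2*(e*i-f*h))
    - 27 * ((a*x+b*y+c*z)^2*(d*x+e*y+f*z)^2*(g*x+h*y+i*z)^2*
    (a*e*i - a*f*h - b*d*i + b*f*g + c*d*h - c*e*g))

theorem jac_eq : jacPoly33 =
    jacForm (S := MvPolynomial (Fin 3) JacR3) (C (X (0, 0))) (C (X (0, 1))) (C (X (0, 2))) (C (X (1, 0))) (C (X (1, 1))) (C (X (1, 2))) (C (X (2, 0))) (C (X (2, 1))) (C (X (2, 2))) (X 0) (X 1) (X 2) := by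
  rw [jacForm, ← jac_generic, jacPoly33, Matrix.det_fin_three]
  simp only [Matrix.of_apply, pderiv_deg]
  simp

theorem C_mul_mem (r : JacR3) (q : ℚ) (hq : q ≠ 0) (h : C q * r ∈ Jideal33) : r ∈ Jideal33 := by
  have := Jideal33.mul_mem_left (C q⁻¹) h
  rwa [← mul_assoc, ← C_mul, inv_mul_cancel₀ hq, C_1, one_mul] at this

theorem mem_of_coeff (i j k : ℕ) (q : ℚ) (hq : q ≠ 0) (h0 : ¬ (i = 0 ∧ j = 0 ∧ k = 0)) {r : JacR3}
    (h : coeff (mdeg i j k) jacPoly33 = C q * r) : r ∈ Jideal33 := by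
  apply C_mul_mem r q hq
  apply Ideal.subset_span
  refine ⟨mdeg i j k, ?_, h⟩
  intro hz
  apply h0
  rw [← mdeg_inj, hz]
  simp [mdeg]

theorem coeff_one_mdeg {S : Type*} [CommRing S] (i j k : ℕ) :
    coeff (mdeg i j k) (1 : MvPolynomial (Fin 3) S) =
      if 0 = i ∧ 0 = j ∧ 0 = k then 1 else 0 := by
  rw [← coeff_term]
  simp

/-- A nine-variable expression evaluated at the variables of `JacR3`. -/
def atX (F : JacR3 → JacR3 → JacR3 → JacR3 → JacR3 → JacR3 → JacR3 → JacR3 → JacR3 → JacR3) :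
    JacR3 :=
  F (X (0, 0)) (X (0, 1)) (X (0, 2)) (X (1, 0)) (X (1, 1)) (X (1, 2)) (X (2, 0)) (X (2, 1)) (X (2, 2))

/-- The term `r x₁^i x₂^j x₃^k`. -/
def tm (r : JacR3) (i j k : ℕ) : MvPolynomial (Fin 3) JacR3 := C r * X 0 ^ i * X 1 ^ j * X 2 ^ k

set_option maxHeartbeats 4000000 in
theorem jac_expanded : jacPoly33 = 1 - C 3 * (tm (atX g200) 2 0 0 + tm (atX g110) 1 1 0 + tm (atX g101) 1 0 1 + tm (atX g020) 0 2 0 +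
      tm (atX g011) 0 1 1 + tm (atX g002) 0 0 2)
    + C 9 * (tm (atX g400) 4 0 0 + tm (atX g310) 3 1 0 + tm (atX g301) 3 0 1 + tm (atX g220) 2 2 0 +
      tm (atX g211) 2 1 1 + tm (atX g202) 2 0 2 + tm (atX g130) 1 3 0 + tm (atX g121) 1 2 1 +
      tm (atX g112) 1 1 2 + tm (atX g103) 1 0 3 + tm (atX g040) 0 4 0 + tm (atX g031) 0 3 1 +
      tm (atX g022) 0 2 2 + tm (atX g013) 0 1 3 + tm (atX g004) 0 0 4)
    - C 27 * (tm (atX g600) 6 0 0 + tm (atX g510) 5 1 0 + tm (atX g501) 5 0 1 + tm (atX g420) 4 2 0 +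
      tm (atX g411) 4 1 1 + tm (atX g402) 4 0 2 + tm (atX g330) 3 3 0 + tm (atX g321) 3 2 1 +
      tm (atX g312) 3 1 2 + tm (atX g303) 3 0 3 + tm (atX g240) 2 4 0 + tm (atX g231) 2 3 1 +
      tm (atX g222) 2 2 2 + tm (atX g213) 2 1 3 + tm (atX g204) 2 0 4 + tm (atX g150) 1 5 0 +
      tm (atX g141) 1 4 1 + tm (atX g132) 1 3 2 + tm (atX g123) 1 2 3 + tm (atX g114) 1 1 4 +
      tm (atX g105) 1 0 5 + tm (atX g060) 0 6 0 + tm (atX g051) 0 5 1 + tm (atX g042) 0 4 2 +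
      tm (atX g033) 0 3 3 + tm (atX g024) 0 2 4 + tm (atX g015) 0 1 5 + tm (atX g006) 0 0 6) := by
  rw [jac_eq, jacForm, expand2, expand4, expand6]
  simp only [tm, atX, g200, g110, g101, g020, g011, g002, g400, g310, g301, g220, g211, g202, g130, g121, g112, g103,
      g040, g031, g022, g013, g004, g600, g510, g501, g420, g411, g402, g330, g321, g312, g303,
      g240, g231, g222, g213, g204, g150, g141, g132, g123, g114, g105, g060, g051, g042, g033,
      g024, g015, g006, map_add, map_sub, map_mul, map_pow, map_ofNat]

theorem mem_g200 : atX g200 ∈ Jideal33 := by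
  apply mem_of_coeff 2 0 0 (-3) (by norm_num) (by norm_num)
  simp only [jac_expanded, coeff_add, coeff_sub, coeff_C_mul, tm, coeff_term, coeff_one_mdeg]
  simp only [map_neg, map_ofNat]
  norm_num

theorem mem_g110 : atX g110 ∈ Jideal33 := by
  apply mem_of_coeff 1 1 0 (-3) (by norm_num) (by norm_num)
  simp only [jac_expanded, coeff_add, coeff_sub, coeff_C_mul, tm, coeff_term, coeff_one_mdeg]
  simp only [map_neg, map_ofNat]
  norm_num

theorem mem_g101 : atX g101 ∈ Jideal33 := by
  apply mem_of_coeff 1 0 1 (-3) (by norm_num) (by norm_num)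
  simp only [jac_expanded, coeff_add, coeff_sub, coeff_C_mul, tm, coeff_term, coeff_one_mdeg]
  simp only [map_neg, map_ofNat]
  norm_num

theorem mem_g020 : atX g020 ∈ Jideal33 := by
  apply mem_of_coeff 0 2 0 (-3) (by norm_num) (by norm_num)
  simp only [jac_expanded, coeff_add, coeff_sub, coeff_C_mul, tm, coeff_term, coeff_one_mdeg]
  simp only [map_neg, map_ofNat]
  norm_num

theorem mem_g011 : atX g011 ∈ Jideal33 := by
  apply mem_of_coeff 0 1 1 (-3) (by norm_num) (by norm_num)
  simp only [jac_expanded, coeff_add, coeff_sub, coeff_C_mul, tm, coeff_term, coeff_one_mdeg]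
  simp only [map_neg, map_ofNat]
  norm_num

theorem mem_g002 : atX g002 ∈ Jideal33 := by
  apply mem_of_coeff 0 0 2 (-3) (by norm_num) (by norm_num)
  simp only [jac_expanded, coeff_add, coeff_sub, coeff_C_mul, tm, coeff_term, coeff_one_mdeg]
  simp only [map_neg, map_ofNat]
  norm_num

theorem mem_g121 : atX g121 ∈ Jideal33 := by
  apply mem_of_coeff 1 2 1 (9) (by norm_num) (by norm_num)
  simp only [jac_expanded, coeff_add, coeff_sub, coeff_C_mul, tm, coeff_term, coeff_one_mdeg]
  simp only [map_neg, map_ofNat]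
  norm_num

theorem mem_g112 : atX g112 ∈ Jideal33 := by
  apply mem_of_coeff 1 1 2 (9) (by norm_num) (by norm_num)
  simp only [jac_expanded, coeff_add, coeff_sub, coeff_C_mul, tm, coeff_term, coeff_one_mdeg]
  simp only [map_neg, map_ofNat]
  norm_num

theorem mem_g031 : atX g031 ∈ Jideal33 := by
  apply mem_of_coeff 0 3 1 (9) (by norm_num) (by norm_num)
  simp only [jac_expanded, coeff_add, coeff_sub, coeff_C_mul, tm, coeff_term, coeff_one_mdeg]
  simp only [map_neg, map_ofNat]
  norm_num

theorem mem_g022 : atX g022 ∈ Jideal33 := by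
  apply mem_of_coeff 0 2 2 (9) (by norm_num) (by norm_num)
  simp only [jac_expanded, coeff_add, coeff_sub, coeff_C_mul, tm, coeff_term, coeff_one_mdeg]
  simp only [map_neg, map_ofNat]
  norm_num

theorem mem_g013 : atX g013 ∈ Jideal33 := by
  apply mem_of_coeff 0 1 3 (9) (by norm_num) (by norm_num)
  simp only [jac_expanded, coeff_add, coeff_sub, coeff_C_mul, tm, coeff_term, coeff_one_mdeg]
  simp only [map_neg, map_ofNat]
  norm_num

theorem mem_g222 : atX g222 ∈ Jideal33 := by
  apply mem_of_coeff 2 2 2 (-27) (by norm_num) (by norm_num)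
  simp only [jac_expanded, coeff_add, coeff_sub, coeff_C_mul, tm, coeff_term, coeff_one_mdeg]
  simp only [map_neg, map_ofNat]
  norm_num

theorem wsum_mem : wOne + wTwo ∈ Jideal33 := by
  apply C_mul_mem _ 2 (by norm_num)
  have h := cert (X (0, 0) : JacR3) (X (0, 1) : JacR3) (X (0, 2) : JacR3) (X (1, 0) : JacR3) (X (1, 1) : JacR3) (X (1, 2) : JacR3) (X (2, 0) : JacR3) (X (2, 1) : JacR3) (X (2, 2) : JacR3)
  have h2 : C 2 * (wOne + wTwo) = _ := Eq.trans (by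
    simp only [wOne, wTwo, Fin.sum_univ_three, map_ofNat]) h
  rw [h2]
  refine Ideal.add_mem _ (Ideal.add_mem _ (Ideal.add_mem _ (Ideal.add_mem _ (Ideal.add_mem _ (Ideal.add_mem _ (Ideal.add_mem _ (Ideal.add_mem _ (Ideal.add_mem _ (Ideal.add_mem _ (Ideal.add_mem _ (Ideal.mul_mem_left _ _ mem_g200)
    (Ideal.mul_mem_left _ _ mem_g110))
    (Ideal.mul_mem_left _ _ mem_g101))
    (Ideal.mul_mem_left _ _ mem_g020))
    (Ideal.mul_mem_left _ _ mem_g011))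
    (Ideal.mul_mem_left _ _ mem_g002))
    (Ideal.mul_mem_left _ _ mem_g121))
    (Ideal.mul_mem_left _ _ mem_g112))
    (Ideal.mul_mem_left _ _ mem_g031))
    (Ideal.mul_mem_left _ _ mem_g022))
    (Ideal.mul_mem_left _ _ mem_g013))
    (Ideal.mul_mem_left _ _ mem_g222)

/-- The specialization keeping only `a₁₂, a₂₃, a₃₁`, all sent to `t`. -/
def phi1 : JacR3 →ₐ[ℚ] Polynomial ℚ :=
  aeval fun p => if p.2 = p.1 + 1 then Polynomial.X else 0

/-- The specialization keeping only `a₁₃, a₃₂, a₂₁`, all sent to `t`. -/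
def phi2 : JacR3 →ₐ[ℚ] Polynomial ℚ :=
  aeval fun p => if p.1 = p.2 + 1 then Polynomial.X else 0

theorem map_jacForm {S T : Type*} [CommRing S] [CommRing T] (ψ : S →+* T)
    (a b c d e f g h i x y z : S) : ψ (jacForm a b c d e f g h i x y z) =
      jacForm (ψ a) (ψ b) (ψ c) (ψ d) (ψ e) (ψ f) (ψ g) (ψ h) (ψ i) (ψ x) (ψ y) (ψ z) := by
  simp only [jacForm, map_add, map_sub, map_mul, map_pow, map_one, map_ofNat]

theorem map_phi1 : MvPolynomial.map phi1.toRingHom jacPoly33 =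
    1 - C 27 * (C (Polynomial.X ^ 9) * X 0 ^ 2 * X 1 ^ 2 * X 2 ^ 2) := by
  rw [jac_eq, map_jacForm, show (C 27 : MvPolynomial (Fin 3) (Polynomial ℚ)) = 27 from map_ofNat C 27]
  simp [phi1, jacForm]
  ring

theorem map_phi2 : MvPolynomial.map phi2.toRingHom jacPoly33 =
    1 - C 27 * (C (Polynomial.X ^ 9) * X 0 ^ 2 * X 1 ^ 2 * X 2 ^ 2) := by
  rw [jac_eq, map_jacForm, show (C 27 : MvPolynomial (Fin 3) (Polynomial ℚ)) = 27 from map_ofNat C 27]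
  simp [phi2, jacForm]
  ring

theorem exists_mdeg (α : Fin 3 →₀ ℕ) : α = mdeg (α 0) (α 1) (α 2) := by
  ext n
  fin_cases n <;> simp [mdeg]

theorem phi_zero (s : JacR3) : (phi1 s).coeff 0 = (phi2 s).coeff 0 := by
  induction s using MvPolynomial.induction_on with
  | C q => simp [phi1, phi2]
  | add p q hp hq => simp [hp, hq]
  | mul_X p n hp =>
    simp only [map_mul, Polynomial.mul_coeff_zero, hp]
    congr 1
    simp only [phi1, phi2, aeval_X]
    split_ifs <;> simp

theorem key (r : JacR3) (hr : r ∈ Jideal33) : ∃ q1 q2 : Polynomial ℚ,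
    phi1 r = Polynomial.X ^ 9 * q1 ∧ phi2 r = Polynomial.X ^ 9 * q2 ∧ q1.coeff 0 = q2.coeff 0 := by
  induction hr using Submodule.span_induction with
  | mem r hr =>
    obtain ⟨α, hα, rfl⟩ := hr
    have h1 : phi1 (coeff α jacPoly33) = coeff α (MvPolynomial.map phi1.toRingHom jacPoly33) := by
      rw [coeff_map]; rfl
    have h2 : phi2 (coeff α jacPoly33) = coeff α (MvPolynomial.map phi2.toRingHom jacPoly33) := by
      rw [coeff_map]; rfl
    have hc : coeff α (1 - C 27 * (C (Polynomial.X ^ 9) * X 0 ^ 2 * X 1 ^ 2 * X 2 ^ 2) :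
        MvPolynomial (Fin 3) (Polynomial ℚ)) = Polynomial.X ^ 9 *
          (- (if 2 = α 0 ∧ 2 = α 1 ∧ 2 = α 2 then 27 else 0)) := by
      rw [coeff_sub, coeff_one, if_neg (Ne.symm hα), coeff_C_mul]
      conv_lhs => rw [exists_mdeg α, coeff_term]
      split_ifs <;> ring
    rw [map_phi1, hc] at h1
    rw [map_phi2, hc] at h2
    exact ⟨_, _, h1, h2, rfl⟩
  | zero => exact ⟨0, 0, by simp, by simp, rfl⟩
  | add x y _ _ hx hy =>
    obtain ⟨p1, p2, h1, h2, h3⟩ := hx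
    obtain ⟨q1, q2, k1, k2, k3⟩ := hy
    exact ⟨p1 + q1, p2 + q2, by rw [map_add, h1, k1]; ring, by rw [map_add, h2, k2]; ring,
      by rw [Polynomial.coeff_add, Polynomial.coeff_add, h3, k3]⟩
  | smul s x _ hx =>
    obtain ⟨p1, p2, h1, h2, h3⟩ := hx
    exact ⟨phi1 s * p1, phi2 s * p2, by rw [smul_eq_mul, map_mul, h1]; ring,
      by rw [smul_eq_mul, map_mul, h2]; ring,
      by rw [Polynomial.mul_coeff_zero, Polynomial.mul_coeff_zero, h3, phi_zero]⟩

theorem wOne_not_mem : wOne ∉ Jideal33 := by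
  intro h
  obtain ⟨q1, q2, h1, h2, h3⟩ := key _ h
  have e1 : phi1 wOne = Polynomial.X ^ 9 * 1 := by
    simp [phi1, wOne, Fin.sum_univ_three]
    ring
  have e2 : phi2 wOne = Polynomial.X ^ 9 * 0 := by
    simp [phi2, wOne, Fin.sum_univ_three]
  have hX : (Polynomial.X ^ 9 : Polynomial ℚ) ≠ 0 := pow_ne_zero _ Polynomial.X_ne_zero
  have f1 := mul_left_cancel₀ hX (e1.symm.trans h1)
  have f2 := mul_left_cancel₀ hX (e2.symm.trans h2)
  rw [← f1, ← f2] at h3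
  simp at h3

/-- `w₁ ∉ J_{3,3}` and `w₂ ∉ J_{3,3}`, but `w₁ + w₂ ∈ J_{3,3}`. -/
theorem stmt15 : wOne ∉ Jideal33 ∧ wTwo ∉ Jideal33 ∧ wOne + wTwo ∈ Jideal33 := by
  refine ⟨wOne_not_mem, fun h => wOne_not_mem ?_, wsum_mem⟩
  have := Ideal.sub_mem _ wsum_mem h
  rwa [add_sub_cancel_right] at this
end
end

section
/- Let n = 3 and d = 3, and set w₁ = a_{1,2}² · Σ_{m=1}^{3} Σ_{p=1}^{3} a_{1,m} a_{m,3}² a_{m,p} a_{p,1}³ ∈ R (this is z(fern_{3,3}, μ) for the root-leaf labeling μ = (1,(2,2),(3,3),(1,1,1))). Then w₁² ∈ J_{3,3}; in particular w₁ lies in the radical of J_{3,3}. -/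
open MvPolynomial Matrix

noncomputable section

set_option linter.unusedVariables false

namespace Jac33Aux

/-! Coefficients of the Jacobian, as explicit polynomials in the nine entries
`a b c / d e f / g h k` of the matrix. -/

section
variable {S : Type*} [CommRing S]

/-- Coefficient at multidegree `(2, 0, 0)`. -/
def j200 (a b c d e f g h k : S) : S :=
    -3*(a^3 + d^2*e + g^2*k)
/-- Coefficient at multidegree `(1, 1, 0)`. -/
def j110 (a b c d e f g h k : S) : S :=
    -3*(2*a^2*b + 2*d*e^2 + 2*g*h*k)
/-- Coefficient at multidegree `(1, 0, 1)`. -/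
def j101 (a b c d e f g h k : S) : S :=
    -3*(2*a^2*c + 2*d*e*f + 2*g*k^2)
/-- Coefficient at multidegree `(0, 2, 0)`. -/
def j020 (a b c d e f g h k : S) : S :=
    -3*(a*b^2 + e^3 + h^2*k)
/-- Coefficient at multidegree `(0, 1, 1)`. -/
def j011 (a b c d e f g h k : S) : S :=
    -3*(2*a*b*c + 2*e^2*f + 2*h*k^2)
/-- Coefficient at multidegree `(0, 0, 2)`. -/
def j002 (a b c d e f g h k : S) : S :=
    -3*(a*c^2 + e*f^2 + k^3)
/-- Coefficient at multidegree `(4, 0, 0)`. -/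
def j400 (a b c d e f g h k : S) : S :=
    9*((a*e - b*d)*(a^2*d^2) + (a*k - c*g)*(a^2*g^2) + (e*k - f*h)*(d^2*g^2))
/-- Coefficient at multidegree `(3, 1, 0)`. -/
def j310 (a b c d e f g h k : S) : S :=
    9*((a*e - b*d)*(2*a^2*d*e + 2*a*b*d^2) + (a*k - c*g)*(2*a^2*g*h + 2*a*b*g^2) + (e*k -
    f*h)*(2*d^2*g*h + 2*d*e*g^2))
/-- Coefficient at multidegree `(3, 0, 1)`. -/
def j301 (a b c d e f g h k : S) : S :=
    9*((a*e - b*d)*(2*a^2*d*f + 2*a*c*d^2) + (a*k - c*g)*(2*a^2*g*k + 2*a*c*g^2) + (e*k -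
    f*h)*(2*d^2*g*k + 2*d*f*g^2))
/-- Coefficient at multidegree `(2, 2, 0)`. -/
def j220 (a b c d e f g h k : S) : S :=
    9*((a*e - b*d)*(a^2*e^2 + 4*a*b*d*e + b^2*d^2) + (a*k - c*g)*(a^2*h^2 + 4*a*b*g*h + b^2*g^2)
    + (e*k - f*h)*(d^2*h^2 + 4*d*e*g*h + e^2*g^2))
/-- Coefficient at multidegree `(2, 1, 1)`. -/
def j211 (a b c d e f g h k : S) : S :=
    9*((a*e - b*d)*(2*a^2*e*f + 4*a*b*d*f + 4*a*c*d*e + 2*b*c*d^2) + (a*k - c*g)*(2*a^2*h*k +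
    4*a*b*g*k + 4*a*c*g*h + 2*b*c*g^2) + (e*k - f*h)*(2*d^2*h*k + 4*d*e*g*k + 4*d*f*g*h +
    2*e*f*g^2))
/-- Coefficient at multidegree `(2, 0, 2)`. -/
def j202 (a b c d e f g h k : S) : S :=
    9*((a*e - b*d)*(a^2*f^2 + 4*a*c*d*f + c^2*d^2) + (a*k - c*g)*(a^2*k^2 + 4*a*c*g*k + c^2*g^2)
    + (e*k - f*h)*(d^2*k^2 + 4*d*f*g*k + f^2*g^2))
/-- Coefficient at multidegree `(1, 3, 0)`. -/
def j130 (a b c d e f g h k : S) : S :=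
    9*((a*e - b*d)*(2*a*b*e^2 + 2*b^2*d*e) + (a*k - c*g)*(2*a*b*h^2 + 2*b^2*g*h) + (e*k -
    f*h)*(2*d*e*h^2 + 2*e^2*g*h))
/-- Coefficient at multidegree `(1, 2, 1)`. -/
def j121 (a b c d e f g h k : S) : S :=
    9*((a*e - b*d)*(4*a*b*e*f + 2*a*c*e^2 + 2*b^2*d*f + 4*b*c*d*e) + (a*k - c*g)*(4*a*b*h*k +
    2*a*c*h^2 + 2*b^2*g*k + 4*b*c*g*h) + (e*k - f*h)*(4*d*e*h*k + 2*d*f*h^2 + 2*e^2*g*k +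
    4*e*f*g*h))
/-- Coefficient at multidegree `(1, 1, 2)`. -/
def j112 (a b c d e f g h k : S) : S :=
    9*((a*e - b*d)*(2*a*b*f^2 + 4*a*c*e*f + 4*b*c*d*f + 2*c^2*d*e) + (a*k - c*g)*(2*a*b*k^2 +
    4*a*c*h*k + 4*b*c*g*k + 2*c^2*g*h) + (e*k - f*h)*(2*d*e*k^2 + 4*d*f*h*k + 4*e*f*g*k +
    2*f^2*g*h))
/-- Coefficient at multidegree `(1, 0, 3)`. -/
def j103 (a b c d e f g h k : S) : S :=
    9*((a*e - b*d)*(2*a*c*f^2 + 2*c^2*d*f) + (a*k - c*g)*(2*a*c*k^2 + 2*c^2*g*k) + (e*k -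
    f*h)*(2*d*f*k^2 + 2*f^2*g*k))
/-- Coefficient at multidegree `(0, 4, 0)`. -/
def j040 (a b c d e f g h k : S) : S :=
    9*((a*e - b*d)*(b^2*e^2) + (a*k - c*g)*(b^2*h^2) + (e*k - f*h)*(e^2*h^2))
/-- Coefficient at multidegree `(0, 3, 1)`. -/
def j031 (a b c d e f g h k : S) : S :=
    9*((a*e - b*d)*(2*b^2*e*f + 2*b*c*e^2) + (a*k - c*g)*(2*b^2*h*k + 2*b*c*h^2) + (e*k -
    f*h)*(2*e^2*h*k + 2*e*f*h^2))
/-- Coefficient at multidegree `(0, 2, 2)`. -/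
def j022 (a b c d e f g h k : S) : S :=
    9*((a*e - b*d)*(b^2*f^2 + 4*b*c*e*f + c^2*e^2) + (a*k - c*g)*(b^2*k^2 + 4*b*c*h*k + c^2*h^2)
    + (e*k - f*h)*(e^2*k^2 + 4*e*f*h*k + f^2*h^2))
/-- Coefficient at multidegree `(0, 1, 3)`. -/
def j013 (a b c d e f g h k : S) : S :=
    9*((a*e - b*d)*(2*b*c*f^2 + 2*c^2*e*f) + (a*k - c*g)*(2*b*c*k^2 + 2*c^2*h*k) + (e*k -
    f*h)*(2*e*f*k^2 + 2*f^2*h*k))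
/-- Coefficient at multidegree `(0, 0, 4)`. -/
def j004 (a b c d e f g h k : S) : S :=
    9*((a*e - b*d)*(c^2*f^2) + (a*k - c*g)*(c^2*k^2) + (e*k - f*h)*(f^2*k^2))
/-- Coefficient at multidegree `(6, 0, 0)`. -/
def j600 (a b c d e f g h k : S) : S :=
    -27*((a*e*k - a*f*h - b*d*k + b*f*g + c*d*h - c*e*g)*(a^2*d^2*g^2))
/-- Coefficient at multidegree `(5, 1, 0)`. -/
def j510 (a b c d e f g h k : S) : S :=
    -27*((a*e*k - a*f*h - b*d*k + b*f*g + c*d*h - c*e*g)*(2*a^2*d^2*g*h + 2*a^2*d*e*g^2 +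
    2*a*b*d^2*g^2))
/-- Coefficient at multidegree `(5, 0, 1)`. -/
def j501 (a b c d e f g h k : S) : S :=
    -27*((a*e*k - a*f*h - b*d*k + b*f*g + c*d*h - c*e*g)*(2*a^2*d^2*g*k + 2*a^2*d*f*g^2 +
    2*a*c*d^2*g^2))
/-- Coefficient at multidegree `(4, 2, 0)`. -/
def j420 (a b c d e f g h k : S) : S :=
    -27*((a*e*k - a*f*h - b*d*k + b*f*g + c*d*h - c*e*g)*(a^2*d^2*h^2 + 4*a^2*d*e*g*h +
    a^2*e^2*g^2 + 4*a*b*d^2*g*h + 4*a*b*d*e*g^2 + b^2*d^2*g^2))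
/-- Coefficient at multidegree `(4, 1, 1)`. -/
def j411 (a b c d e f g h k : S) : S :=
    -27*((a*e*k - a*f*h - b*d*k + b*f*g + c*d*h - c*e*g)*(2*a^2*d^2*h*k + 4*a^2*d*e*g*k +
    4*a^2*d*f*g*h + 2*a^2*e*f*g^2 + 4*a*b*d^2*g*k + 4*a*b*d*f*g^2 + 4*a*c*d^2*g*h +
    4*a*c*d*e*g^2 + 2*b*c*d^2*g^2))
/-- Coefficient at multidegree `(4, 0, 2)`. -/
def j402 (a b c d e f g h k : S) : S :=
    -27*((a*e*k - a*f*h - b*d*k + b*f*g + c*d*h - c*e*g)*(a^2*d^2*k^2 + 4*a^2*d*f*g*k +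
    a^2*f^2*g^2 + 4*a*c*d^2*g*k + 4*a*c*d*f*g^2 + c^2*d^2*g^2))
/-- Coefficient at multidegree `(3, 3, 0)`. -/
def j330 (a b c d e f g h k : S) : S :=
    -27*((a*e*k - a*f*h - b*d*k + b*f*g + c*d*h - c*e*g)*(2*a^2*d*e*h^2 + 2*a^2*e^2*g*h +
    2*a*b*d^2*h^2 + 8*a*b*d*e*g*h + 2*a*b*e^2*g^2 + 2*b^2*d^2*g*h + 2*b^2*d*e*g^2))
/-- Coefficient at multidegree `(3, 2, 1)`. -/
def j321 (a b c d e f g h k : S) : S :=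
    -27*((a*e*k - a*f*h - b*d*k + b*f*g + c*d*h - c*e*g)*(4*a^2*d*e*h*k + 2*a^2*d*f*h^2 +
    2*a^2*e^2*g*k + 4*a^2*e*f*g*h + 4*a*b*d^2*h*k + 8*a*b*d*e*g*k + 8*a*b*d*f*g*h +
    4*a*b*e*f*g^2 + 2*a*c*d^2*h^2 + 8*a*c*d*e*g*h + 2*a*c*e^2*g^2 + 2*b^2*d^2*g*k +
    2*b^2*d*f*g^2 + 4*b*c*d^2*g*h + 4*b*c*d*e*g^2))
/-- Coefficient at multidegree `(3, 1, 2)`. -/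
def j312 (a b c d e f g h k : S) : S :=
    -27*((a*e*k - a*f*h - b*d*k + b*f*g + c*d*h - c*e*g)*(2*a^2*d*e*k^2 + 4*a^2*d*f*h*k +
    4*a^2*e*f*g*k + 2*a^2*f^2*g*h + 2*a*b*d^2*k^2 + 8*a*b*d*f*g*k + 2*a*b*f^2*g^2 +
    4*a*c*d^2*h*k + 8*a*c*d*e*g*k + 8*a*c*d*f*g*h + 4*a*c*e*f*g^2 + 4*b*c*d^2*g*k +
    4*b*c*d*f*g^2 + 2*c^2*d^2*g*h + 2*c^2*d*e*g^2))
/-- Coefficient at multidegree `(3, 0, 3)`. -/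
def j303 (a b c d e f g h k : S) : S :=
    -27*((a*e*k - a*f*h - b*d*k + b*f*g + c*d*h - c*e*g)*(2*a^2*d*f*k^2 + 2*a^2*f^2*g*k +
    2*a*c*d^2*k^2 + 8*a*c*d*f*g*k + 2*a*c*f^2*g^2 + 2*c^2*d^2*g*k + 2*c^2*d*f*g^2))
/-- Coefficient at multidegree `(2, 4, 0)`. -/
def j240 (a b c d e f g h k : S) : S :=
    -27*((a*e*k - a*f*h - b*d*k + b*f*g + c*d*h - c*e*g)*(a^2*e^2*h^2 + 4*a*b*d*e*h^2 +
    4*a*b*e^2*g*h + b^2*d^2*h^2 + 4*b^2*d*e*g*h + b^2*e^2*g^2))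
/-- Coefficient at multidegree `(2, 3, 1)`. -/
def j231 (a b c d e f g h k : S) : S :=
    -27*((a*e*k - a*f*h - b*d*k + b*f*g + c*d*h - c*e*g)*(2*a^2*e^2*h*k + 2*a^2*e*f*h^2 +
    8*a*b*d*e*h*k + 4*a*b*d*f*h^2 + 4*a*b*e^2*g*k + 8*a*b*e*f*g*h + 4*a*c*d*e*h^2 +
    4*a*c*e^2*g*h + 2*b^2*d^2*h*k + 4*b^2*d*e*g*k + 4*b^2*d*f*g*h + 2*b^2*e*f*g^2 +
    2*b*c*d^2*h^2 + 8*b*c*d*e*g*h + 2*b*c*e^2*g^2))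
/-- Coefficient at multidegree `(2, 2, 2)`. -/
def j222 (a b c d e f g h k : S) : S :=
    -27*((a*e*k - a*f*h - b*d*k + b*f*g + c*d*h - c*e*g)*(a^2*e^2*k^2 + 4*a^2*e*f*h*k +
    a^2*f^2*h^2 + 4*a*b*d*e*k^2 + 8*a*b*d*f*h*k + 8*a*b*e*f*g*k + 4*a*b*f^2*g*h + 8*a*c*d*e*h*k
    + 4*a*c*d*f*h^2 + 4*a*c*e^2*g*k + 8*a*c*e*f*g*h + b^2*d^2*k^2 + 4*b^2*d*f*g*k + b^2*f^2*g^2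
    + 4*b*c*d^2*h*k + 8*b*c*d*e*g*k + 8*b*c*d*f*g*h + 4*b*c*e*f*g^2 + c^2*d^2*h^2 +
    4*c^2*d*e*g*h + c^2*e^2*g^2))
/-- Coefficient at multidegree `(2, 1, 3)`. -/
def j213 (a b c d e f g h k : S) : S :=
    -27*((a*e*k - a*f*h - b*d*k + b*f*g + c*d*h - c*e*g)*(2*a^2*e*f*k^2 + 2*a^2*f^2*h*k +
    4*a*b*d*f*k^2 + 4*a*b*f^2*g*k + 4*a*c*d*e*k^2 + 8*a*c*d*f*h*k + 8*a*c*e*f*g*k +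
    4*a*c*f^2*g*h + 2*b*c*d^2*k^2 + 8*b*c*d*f*g*k + 2*b*c*f^2*g^2 + 2*c^2*d^2*h*k +
    4*c^2*d*e*g*k + 4*c^2*d*f*g*h + 2*c^2*e*f*g^2))
/-- Coefficient at multidegree `(2, 0, 4)`. -/
def j204 (a b c d e f g h k : S) : S :=
    -27*((a*e*k - a*f*h - b*d*k + b*f*g + c*d*h - c*e*g)*(a^2*f^2*k^2 + 4*a*c*d*f*k^2 +
    4*a*c*f^2*g*k + c^2*d^2*k^2 + 4*c^2*d*f*g*k + c^2*f^2*g^2))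
/-- Coefficient at multidegree `(1, 5, 0)`. -/
def j150 (a b c d e f g h k : S) : S :=
    -27*((a*e*k - a*f*h - b*d*k + b*f*g + c*d*h - c*e*g)*(2*a*b*e^2*h^2 + 2*b^2*d*e*h^2 +
    2*b^2*e^2*g*h))
/-- Coefficient at multidegree `(1, 4, 1)`. -/
def j141 (a b c d e f g h k : S) : S :=
    -27*((a*e*k - a*f*h - b*d*k + b*f*g + c*d*h - c*e*g)*(4*a*b*e^2*h*k + 4*a*b*e*f*h^2 +
    2*a*c*e^2*h^2 + 4*b^2*d*e*h*k + 2*b^2*d*f*h^2 + 2*b^2*e^2*g*k + 4*b^2*e*f*g*h +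
    4*b*c*d*e*h^2 + 4*b*c*e^2*g*h))
/-- Coefficient at multidegree `(1, 3, 2)`. -/
def j132 (a b c d e f g h k : S) : S :=
    -27*((a*e*k - a*f*h - b*d*k + b*f*g + c*d*h - c*e*g)*(2*a*b*e^2*k^2 + 8*a*b*e*f*h*k +
    2*a*b*f^2*h^2 + 4*a*c*e^2*h*k + 4*a*c*e*f*h^2 + 2*b^2*d*e*k^2 + 4*b^2*d*f*h*k +
    4*b^2*e*f*g*k + 2*b^2*f^2*g*h + 8*b*c*d*e*h*k + 4*b*c*d*f*h^2 + 4*b*c*e^2*g*k +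
    8*b*c*e*f*g*h + 2*c^2*d*e*h^2 + 2*c^2*e^2*g*h))
/-- Coefficient at multidegree `(1, 2, 3)`. -/
def j123 (a b c d e f g h k : S) : S :=
    -27*((a*e*k - a*f*h - b*d*k + b*f*g + c*d*h - c*e*g)*(4*a*b*e*f*k^2 + 4*a*b*f^2*h*k +
    2*a*c*e^2*k^2 + 8*a*c*e*f*h*k + 2*a*c*f^2*h^2 + 2*b^2*d*f*k^2 + 2*b^2*f^2*g*k +
    4*b*c*d*e*k^2 + 8*b*c*d*f*h*k + 8*b*c*e*f*g*k + 4*b*c*f^2*g*h + 4*c^2*d*e*h*k +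
    2*c^2*d*f*h^2 + 2*c^2*e^2*g*k + 4*c^2*e*f*g*h))
/-- Coefficient at multidegree `(1, 1, 4)`. -/
def j114 (a b c d e f g h k : S) : S :=
    -27*((a*e*k - a*f*h - b*d*k + b*f*g + c*d*h - c*e*g)*(2*a*b*f^2*k^2 + 4*a*c*e*f*k^2 +
    4*a*c*f^2*h*k + 4*b*c*d*f*k^2 + 4*b*c*f^2*g*k + 2*c^2*d*e*k^2 + 4*c^2*d*f*h*k +
    4*c^2*e*f*g*k + 2*c^2*f^2*g*h))
/-- Coefficient at multidegree `(1, 0, 5)`. -/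
def j105 (a b c d e f g h k : S) : S :=
    -27*((a*e*k - a*f*h - b*d*k + b*f*g + c*d*h - c*e*g)*(2*a*c*f^2*k^2 + 2*c^2*d*f*k^2 +
    2*c^2*f^2*g*k))
/-- Coefficient at multidegree `(0, 6, 0)`. -/
def j060 (a b c d e f g h k : S) : S :=
    -27*((a*e*k - a*f*h - b*d*k + b*f*g + c*d*h - c*e*g)*(b^2*e^2*h^2))
/-- Coefficient at multidegree `(0, 5, 1)`. -/
def j051 (a b c d e f g h k : S) : S :=
    -27*((a*e*k - a*f*h - b*d*k + b*f*g + c*d*h - c*e*g)*(2*b^2*e^2*h*k + 2*b^2*e*f*h^2 +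
    2*b*c*e^2*h^2))
/-- Coefficient at multidegree `(0, 4, 2)`. -/
def j042 (a b c d e f g h k : S) : S :=
    -27*((a*e*k - a*f*h - b*d*k + b*f*g + c*d*h - c*e*g)*(b^2*e^2*k^2 + 4*b^2*e*f*h*k +
    b^2*f^2*h^2 + 4*b*c*e^2*h*k + 4*b*c*e*f*h^2 + c^2*e^2*h^2))
/-- Coefficient at multidegree `(0, 3, 3)`. -/
def j033 (a b c d e f g h k : S) : S :=
    -27*((a*e*k - a*f*h - b*d*k + b*f*g + c*d*h - c*e*g)*(2*b^2*e*f*k^2 + 2*b^2*f^2*h*k +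
    2*b*c*e^2*k^2 + 8*b*c*e*f*h*k + 2*b*c*f^2*h^2 + 2*c^2*e^2*h*k + 2*c^2*e*f*h^2))
/-- Coefficient at multidegree `(0, 2, 4)`. -/
def j024 (a b c d e f g h k : S) : S :=
    -27*((a*e*k - a*f*h - b*d*k + b*f*g + c*d*h - c*e*g)*(b^2*f^2*k^2 + 4*b*c*e*f*k^2 +
    4*b*c*f^2*h*k + c^2*e^2*k^2 + 4*c^2*e*f*h*k + c^2*f^2*h^2))
/-- Coefficient at multidegree `(0, 1, 5)`. -/
def j015 (a b c d e f g h k : S) : S :=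
    -27*((a*e*k - a*f*h - b*d*k + b*f*g + c*d*h - c*e*g)*(2*b*c*f^2*k^2 + 2*c^2*e*f*k^2 +
    2*c^2*f^2*h*k))
/-- Coefficient at multidegree `(0, 0, 6)`. -/
def j006 (a b c d e f g h k : S) : S :=
    -27*((a*e*k - a*f*h - b*d*k + b*f*g + c*d*h - c*e*g)*(c^2*f^2*k^2))

theorem part2 (a b c d e f g h k : S) (x y z : S) :
    -3*(a*(a*x+b*y+c*z)^2 + e*(d*x+e*y+f*z)^2 + k*(g*x+h*y+k*z)^2) =
    j200 a b c d e f g h k * (x^2*y^0*z^0) + j110 a b c d e f g h k * (x^1*y^1*z^0) + j101 a b c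
    d e f g h k * (x^1*y^0*z^1) + j020 a b c d e f g h k * (x^0*y^2*z^0) + j011 a b c d e f g h
    k * (x^0*y^1*z^1) + j002 a b c d e f g h k * (x^0*y^0*z^2) := by
  simp only [j200, j110, j101, j020, j011, j002]
  ring


theorem part4 (a b c d e f g h k : S) (x y z : S) :
    9*((a*e-b*d)*((a*x+b*y+c*z)^2*(d*x+e*y+f*z)^2) + (a*k-c*g)*((a*x+b*y+c*z)^2*(g*x+h*y+k*z)^2)
      + (e*k-f*h)*((d*x+e*y+f*z)^2*(g*x+h*y+k*z)^2)) =
    j400 a b c d e f g h k * (x^4*y^0*z^0) + j310 a b c d e f g h k * (x^3*y^1*z^0) + j301 a b c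
    d e f g h k * (x^3*y^0*z^1) + j220 a b c d e f g h k * (x^2*y^2*z^0) + j211 a b c d e f g h
    k * (x^2*y^1*z^1) + j202 a b c d e f g h k * (x^2*y^0*z^2) + j130 a b c d e f g h k *
    (x^1*y^3*z^0) + j121 a b c d e f g h k * (x^1*y^2*z^1) + j112 a b c d e f g h k *
    (x^1*y^1*z^2) + j103 a b c d e f g h k * (x^1*y^0*z^3) + j040 a b c d e f g h k *
    (x^0*y^4*z^0) + j031 a b c d e f g h k * (x^0*y^3*z^1) + j022 a b c d e f g h k *
    (x^0*y^2*z^2) + j013 a b c d e f g h k * (x^0*y^1*z^3) + j004 a b c d e f g h k *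
    (x^0*y^0*z^4) := by
  simp only [j400, j310, j301, j220, j211, j202, j130, j121, j112, j103, j040, j031, j022, j013, j004]
  ring


theorem part6 (a b c d e f g h k : S) (x y z : S) :
    -27*((a*e*k - a*f*h - b*d*k + b*f*g + c*d*h - c*e*g)*
      ((a*x+b*y+c*z)^2*(d*x+e*y+f*z)^2*(g*x+h*y+k*z)^2)) =
    j600 a b c d e f g h k * (x^6*y^0*z^0) + j510 a b c d e f g h k * (x^5*y^1*z^0) + j501 a b c
    d e f g h k * (x^5*y^0*z^1) + j420 a b c d e f g h k * (x^4*y^2*z^0) + j411 a b c d e f g h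
    k * (x^4*y^1*z^1) + j402 a b c d e f g h k * (x^4*y^0*z^2) + j330 a b c d e f g h k *
    (x^3*y^3*z^0) + j321 a b c d e f g h k * (x^3*y^2*z^1) + j312 a b c d e f g h k *
    (x^3*y^1*z^2) + j303 a b c d e f g h k * (x^3*y^0*z^3) + j240 a b c d e f g h k *
    (x^2*y^4*z^0) + j231 a b c d e f g h k * (x^2*y^3*z^1) + j222 a b c d e f g h k *
    (x^2*y^2*z^2) + j213 a b c d e f g h k * (x^2*y^1*z^3) + j204 a b c d e f g h k *
    (x^2*y^0*z^4) + j150 a b c d e f g h k * (x^1*y^5*z^0) + j141 a b c d e f g h k *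
    (x^1*y^4*z^1) + j132 a b c d e f g h k * (x^1*y^3*z^2) + j123 a b c d e f g h k *
    (x^1*y^2*z^3) + j114 a b c d e f g h k * (x^1*y^1*z^4) + j105 a b c d e f g h k *
    (x^1*y^0*z^5) + j060 a b c d e f g h k * (x^0*y^6*z^0) + j051 a b c d e f g h k *
    (x^0*y^5*z^1) + j042 a b c d e f g h k * (x^0*y^4*z^2) + j033 a b c d e f g h k *
    (x^0*y^3*z^3) + j024 a b c d e f g h k * (x^0*y^2*z^4) + j015 a b c d e f g h k *
    (x^0*y^1*z^5) + j006 a b c d e f g h k * (x^0*y^0*z^6) := by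
  simp only [j600, j510, j501, j420, j411, j402, j330, j321, j312, j303, j240, j231, j222, j213, j204, j150, j141, j132, j123, j114, j105, j060, j051, j042, j033, j024, j015, j006]
  ring

theorem detPart (a b c d e f g h k : S) (u v w : S) :
    (1 - 3*u^2*a) * (1 - 3*v^2*e) * (1 - 3*w^2*k) - (1 - 3*u^2*a) * (0 - 3*v^2*f) * (0 - 3*w^2*h)
      - (0 - 3*u^2*b) * (0 - 3*v^2*d) * (1 - 3*w^2*k) + (0 - 3*u^2*b) * (0 - 3*v^2*f) * (0 - 3*w^2*g)
      + (0 - 3*u^2*c) * (0 - 3*v^2*d) * (0 - 3*w^2*h) - (0 - 3*u^2*c) * (1 - 3*v^2*e) * (0 - 3*w^2*g)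
    = 1 + -3*(a*u^2 + e*v^2 + k*w^2)
      + 9*((a*e-b*d)*(u^2*v^2) + (a*k-c*g)*(u^2*w^2) + (e*k-f*h)*(v^2*w^2))
      + -27*((a*e*k - a*f*h - b*d*k + b*f*g + c*d*h - c*e*g)*(u^2*v^2*w^2)) := by
  ring

/-- Cofactor of the coefficient at `(2, 0, 0)` in the certificate. -/
def q200 (a b c d e f g h k : S) : S :=
    234*a^2*b^3*c^2 - 234*a*b^3*k^3 + 216*a*b^2*c*h*k^2 - 36*a*b*c^2*e^3 + 108*a*b*c^2*h^2*k +
    54*b^4*d*f^2 + 198*b^3*c*d*e*f + 162*b^3*c*g*k^2 + 108*b^2*c^2*g*h*k - 54*b*e*f^2*h^2*k +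
    126*b*f^3*h^3 + 72*b*h^2*k^4 - 18*c*e^5*f + 18*c*e*f^2*h^3 + 36*c*h^3*k^3
/-- Cofactor of the coefficient at `(1, 1, 0)` in the certificate. -/
def q110 (a b c d e f g h k : S) : S :=
    -9*a^3*b^2*c^2 + 108*a^2*b^2*k^3 + 81*a^2*b*c*h*k^2 + 63*a*b^3*d*f^2 - 99*a*b^2*c*d*e*f -
    45*a*b^2*c*g*k^2 - 9*a*b*c^2*g*h*k + 72*a*e^2*f*h*k^2 - 72*a*f^3*h^3 + 72*b^3*c*d^2*f -
    27*b^2*c^2*d^2*e - 54*b^2*c^2*g^2*k - 63*b*d*e^2*k^3 + 72*b*d*e*f*h*k^2 + 81*b*d*f^2*h^2*k +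
    36*b*e^2*f*g*k^2 - 90*b*f^3*g*h^2 - 27*b*g*h*k^4 - 99*c*d*e^4*f - 27*c*d*e*f*h^2*k +
    72*c*d*f^2*h^3 + 27*c*e*f^2*g*h^2 + 108*c*g*h^2*k^3
/-- Cofactor of the coefficient at `(1, 0, 1)` in the certificate. -/
def q101 (a b c d e f g h k : S) : S :=
    126*a^2*b^2*e^2*f - 63*a^2*b*c*h^2*k + 36*a*b^3*g*k^2 + 45*a*b^2*c*d*e^2 + 99*a*b*c^2*g*h^2
    - 27*b^4*d^2*f - 135*b^3*c*d^2*e - 108*b^3*c*g^2*k + 36*b^2*c^2*g^2*h - 9*b*d*e^2*h*k^2 -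
    81*b*d*f^2*h^3 + 27*b*e*f^2*g*h^2 - 27*c*d*e^2*h^2*k - 117*c*d*e*f*h^3 + 99*c*e^2*f*g*h^2 +
    18*c*g*h^3*k^2
/-- Cofactor of the coefficient at `(0, 2, 0)` in the certificate. -/
def q020 (a b c d e f g h k : S) : S :=
    18*a^4*b*c^2 + 18*a^3*b*k^3 - 36*a^3*c*h*k^2 - 198*a^2*b^2*d*f^2 - 18*a^2*c^2*g*h*k +
    108*a*b^2*c*d^2*f - 252*a*d*e*f*h*k^2 + 126*a*f^3*g*h^2 + 54*b^2*c^2*d^3 - 36*b*d^2*e^2*f^2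
    + 90*b*d^2*e*k^3 - 90*b*d^2*f*h*k^2 - 72*b*d*e*f*g*k^2 + 54*b*f^3*g^2*h + 216*c*d^2*e^3*f +
    252*c*d*e*f*g*h*k - 144*c*d*f^2*g*h^2 + 18*c*e^2*f*g^2*k - 54*c*e*f^2*g^2*h - 54*c*g^2*h*k^3
/-- Cofactor of the coefficient at `(0, 1, 1)` in the certificate. -/
def q011 (a b c d e f g h k : S) : S :=
    -126*a^4*b^2*c - 45*a^3*b*h*k^2 + 9*a^3*c*e^3 - 81*a^2*b^2*g*k^2 - 18*a^2*b*c*d*e^2 -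
    27*a^2*b*c*g*h*k - 99*a*b^3*d^2*f - 36*a*b^2*c*g^2*k - 36*a*b*c^2*g^2*h - 27*b^3*c*d^3 -
    27*b^2*c^2*g^3 - 81*b*d^2*e*h*k^2 + 27*b*d^2*f*h^2*k - 36*b*d*e*f*g*h*k - 9*b*g^2*h*k^3 -
    90*c*d*e^2*g*h*k + 9*c*d*e*f*g*h^2 + 9*c*e^2*f*g^2*h - 108*c*g^2*h^2*k^2
/-- Cofactor of the coefficient at `(0, 0, 2)` in the certificate. -/
def q002 (a b c d e f g h k : S) : S :=
    -36*a^2*b^2*d*e^2 - 198*a^2*b*c*g*h^2 + 90*a*b^3*d^2*e + 162*a*b^3*g^2*k + 252*a*d*e*f*h^3 -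
    126*a*e^2*f*g*h^2 - 18*b^4*d^3 + 36*b^3*c*g^3 + 36*b*d^2*e^4 + 36*b*d^2*f*h^3 +
    198*b*d*e^2*g*h*k - 54*b*e^2*f*g^2*h - 36*c*d^2*e*h^3 + 36*c*e^3*g^2*h - 18*c*g^2*h^3*k
/-- Cofactor of the coefficient at `(1, 3, 0)` in the certificate. -/
def q130 (a b c d e f g h k : S) : S :=
    21*b*d*f^2 - 21*c*d*e*f - 3*c*g*k^2
/-- Cofactor of the coefficient at `(0, 4, 0)` in the certificate. -/
def q040 (a b c d e f g h k : S) : S :=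
    78*c*d^2*f
/-- Cofactor of the coefficient at `(0, 3, 1)` in the certificate. -/
def q031 (a b c d e f g h k : S) : S :=
    -18*a*d*e*f - 21*b*d^2*f
/-- Cofactor of the coefficient at `(0, 1, 3)` in the certificate. -/
def q013 (a b c d e f g h k : S) : S :=
    3*a*g*h^2
/-- Cofactor of the coefficient at `(2, 3, 1)` in the certificate. -/
def q231 (a b c d e f g h k : S) : S :=
    c
/-- Cofactor of the coefficient at `(2, 2, 2)` in the certificate. -/
def q222 (a b c d e f g h k : S) : S :=
    -2*b

theorem certificate (a b c d e f g h k : S) :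
    54*(b*(b^2*(a^5*c^2 + a^3*b*d*f^2 + a^3*c*g*k^2 + a*b*c^2*d^3 + a*c^3*g^3 + b*d^3*e*f^2 + b*f^3*g^3 + c*d^3*h*k^2 + c*g^3*k^3))) =
    q200 a b c d e f g h k * j200 a b c d e f g h k + q110 a b c d e f g h k * j110 a b c d e f
    g h k + q101 a b c d e f g h k * j101 a b c d e f g h k + q020 a b c d e f g h k * j020 a b
    c d e f g h k + q011 a b c d e f g h k * j011 a b c d e f g h k + q002 a b c d e f g h k *
    j002 a b c d e f g h k + q130 a b c d e f g h k * j130 a b c d e f g h k + q040 a b c d e f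
    g h k * j040 a b c d e f g h k + q031 a b c d e f g h k * j031 a b c d e f g h k + q013 a b
    c d e f g h k * j013 a b c d e f g h k + q231 a b c d e f g h k * j231 a b c d e f g h k +
    q222 a b c d e f g h k * j222 a b c d e f g h k := by
  simp only [j200, j110, j101, j020, j011, j002, j130, j040, j031, j013, j231, j222, q200, q110, q101, q020, q011, q002, q130, q040, q031, q013, q231, q222]
  ring

end

/-- Evaluate a nine-argument function at the matrix of indeterminates. -/
def atX (F : JacR3 → JacR3 → JacR3 → JacR3 → JacR3 → JacR3 → JacR3 → JacR3 → JacR3 → JacR3) : JacR3 :=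
  F (X (0,0)) (X (0,1)) (X (0,2)) (X (1,0)) (X (1,1)) (X (1,2)) (X (2,0)) (X (2,1)) (X (2,2))

/-- The multidegree `(i, j, k)`. -/
def deg (i j k : ℕ) : Fin 3 →₀ ℕ := Finsupp.single 0 i + Finsupp.single 1 j + Finsupp.single 2 k

theorem deg_inj {i j k i' j' k' : ℕ} : deg i j k = deg i' j' k' ↔ i = i' ∧ j = j' ∧ k = k' := by
  constructor
  · intro h
    have h0 := DFunLike.congr_fun h 0
    have h1 := DFunLike.congr_fun h 1
    have h2 := DFunLike.congr_fun h 2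
    simp [deg] at h0 h1 h2
    exact ⟨h0, h1, h2⟩
  · rintro ⟨rfl, rfl, rfl⟩
    rfl

/-- The polynomial `r x₁^i x₂^j x₃^k`. -/
def monoTerm (r : JacR3) (i j k : ℕ) : MvPolynomial (Fin 3) JacR3 := C r * (X 0 ^ i * X 1 ^ j * X 2 ^ k)

theorem coeff_term (r : JacR3) (i j k i' j' k' : ℕ) :
    coeff (deg i' j' k') (monoTerm r i j k) =
      if i = i' ∧ j = j' ∧ k = k' then r else 0 := by
  have h : (X 0 ^ i * X 1 ^ j * X 2 ^ k : MvPolynomial (Fin 3) JacR3) = monomial (deg i j k) 1 := by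
    simp [deg, X_pow_eq_monomial, monomial_mul]
  rw [monoTerm, h, C_mul_monomial, mul_one, coeff_monomial]
  simp only [deg_inj]

theorem coeff_one_deg (i' j' k' : ℕ) :
    coeff (deg i' j' k') (1 : MvPolynomial (Fin 3) JacR3) =
      if 0 = i' ∧ 0 = j' ∧ 0 = k' then 1 else 0 := by
  have := coeff_term 1 0 0 0 i' j' k'
  simpa [monoTerm] using this

theorem pderiv_comp (i j : Fin 3) : pderiv j (degLinMap33 i) =
    (if i = j then 1 else 0) - 3 * (∑ l : Fin 3, C (X (i, l) : JacR3) * X l) ^ 2 * C (X (i, j)) := by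
  unfold degLinMap33
  rw [map_sub, pderiv_X, Derivation.leibniz_pow]
  congr 1
  · simp [Pi.single_apply]
  · simp only [map_sum, Derivation.leibniz, pderiv_C, pderiv_X, Pi.single_apply, smul_eq_mul, nsmul_eq_mul]
    simp
    ring

set_option maxHeartbeats 4000000 in
theorem jac_eq : jacPoly33 = 1 +
    monoTerm (atX j200) 2 0 0 + monoTerm (atX j110) 1 1 0 + monoTerm (atX j101) 1 0 1 + monoTerm (atX j020) 0 2
    0 + monoTerm (atX j011) 0 1 1 + monoTerm (atX j002) 0 0 2 + monoTerm (atX j400) 4 0 0 + monoTerm (atX j310)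
    3 1 0 + monoTerm (atX j301) 3 0 1 + monoTerm (atX j220) 2 2 0 + monoTerm (atX j211) 2 1 1 + monoTerm (atX
    j202) 2 0 2 + monoTerm (atX j130) 1 3 0 + monoTerm (atX j121) 1 2 1 + monoTerm (atX j112) 1 1 2 + monoTerm
    (atX j103) 1 0 3 + monoTerm (atX j040) 0 4 0 + monoTerm (atX j031) 0 3 1 + monoTerm (atX j022) 0 2 2 +
    monoTerm (atX j013) 0 1 3 + monoTerm (atX j004) 0 0 4 + monoTerm (atX j600) 6 0 0 + monoTerm (atX j510) 5 1
    0 + monoTerm (atX j501) 5 0 1 + monoTerm (atX j420) 4 2 0 + monoTerm (atX j411) 4 1 1 + monoTerm (atX j402)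
    4 0 2 + monoTerm (atX j330) 3 3 0 + monoTerm (atX j321) 3 2 1 + monoTerm (atX j312) 3 1 2 + monoTerm (atX
    j303) 3 0 3 + monoTerm (atX j240) 2 4 0 + monoTerm (atX j231) 2 3 1 + monoTerm (atX j222) 2 2 2 + monoTerm
    (atX j213) 2 1 3 + monoTerm (atX j204) 2 0 4 + monoTerm (atX j150) 1 5 0 + monoTerm (atX j141) 1 4 1 +
    monoTerm (atX j132) 1 3 2 + monoTerm (atX j123) 1 2 3 + monoTerm (atX j114) 1 1 4 + monoTerm (atX j105) 1 0
    5 + monoTerm (atX j060) 0 6 0 + monoTerm (atX j051) 0 5 1 + monoTerm (atX j042) 0 4 2 + monoTerm (atX j033)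
    0 3 3 + monoTerm (atX j024) 0 2 4 + monoTerm (atX j015) 0 1 5 + monoTerm (atX j006) 0 0 6 := by
  have h := detPart (S := MvPolynomial (Fin 3) JacR3)
    (C (X (0,0))) (C (X (0,1))) (C (X (0,2))) (C (X (1,0))) (C (X (1,1))) (C (X (1,2))) (C (X (2,0))) (C (X (2,1))) (C (X (2,2)))
    (∑ j : Fin 3, C (X (0, j) : JacR3) * X j : MvPolynomial (Fin 3) JacR3)
    (∑ j : Fin 3, C (X (1, j) : JacR3) * X j : MvPolynomial (Fin 3) JacR3)
    (∑ j : Fin 3, C (X (2, j) : JacR3) * X j : MvPolynomial (Fin 3) JacR3)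
  refine Eq.trans ?_ (h.trans ?_)
  · unfold jacPoly33
    rw [Matrix.det_fin_three]
    simp only [Matrix.of_apply, pderiv_comp]
    simp only [Fin.isValue, if_true, Fin.reduceEq, if_false]
  simp only [Fin.sum_univ_three]
  rw [part2, part4, part6]
  simp only [monoTerm, atX, j200, j110, j101, j020, j011, j002, j400, j310, j301, j220, j211, j202, j130, j121, j112, j103, j040, j031, j022, j013, j004, j600, j510, j501, j420, j411, j402, j330, j321, j312, j303, j240, j231, j222, j213, j204, j150, j141, j132, j123, j114, j105, j060, j051, j042, j033, j024, j015, j006, map_add, map_sub, map_mul, map_neg, map_pow, map_ofNat, add_assoc]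

theorem mem_of_eq {x y z : JacR3} (hxy : x = y) (hyz : y = z) (hz : z ∈ Jideal33) : x ∈ Jideal33 := by
  rw [hxy, hyz]
  exact hz

theorem mem_of_coeff {r : JacR3} (i j k : ℕ) (hne : i + j + k ≠ 0)
    (h : coeff (deg i j k) jacPoly33 = r) : r ∈ Jideal33 := by
  refine Ideal.subset_span ⟨deg i j k, ?_, h⟩
  intro h0
  have h1 : deg i j k = deg 0 0 0 := by rw [h0]; simp [deg]
  rw [deg_inj] at h1
  omega

theorem mem_j200 : atX j200 ∈ Jideal33 := by
  refine mem_of_coeff 2 0 0 (by norm_num) ?_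
  rw [jac_eq]
  simp only [coeff_add, coeff_term, coeff_one_deg]
  norm_num

theorem mem_j110 : atX j110 ∈ Jideal33 := by
  refine mem_of_coeff 1 1 0 (by norm_num) ?_
  rw [jac_eq]
  simp only [coeff_add, coeff_term, coeff_one_deg]
  norm_num

theorem mem_j101 : atX j101 ∈ Jideal33 := by
  refine mem_of_coeff 1 0 1 (by norm_num) ?_
  rw [jac_eq]
  simp only [coeff_add, coeff_term, coeff_one_deg]
  norm_num

theorem mem_j020 : atX j020 ∈ Jideal33 := by
  refine mem_of_coeff 0 2 0 (by norm_num) ?_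
  rw [jac_eq]
  simp only [coeff_add, coeff_term, coeff_one_deg]
  norm_num

theorem mem_j011 : atX j011 ∈ Jideal33 := by
  refine mem_of_coeff 0 1 1 (by norm_num) ?_
  rw [jac_eq]
  simp only [coeff_add, coeff_term, coeff_one_deg]
  norm_num

theorem mem_j002 : atX j002 ∈ Jideal33 := by
  refine mem_of_coeff 0 0 2 (by norm_num) ?_
  rw [jac_eq]
  simp only [coeff_add, coeff_term, coeff_one_deg]
  norm_num

theorem mem_j130 : atX j130 ∈ Jideal33 := by
  refine mem_of_coeff 1 3 0 (by norm_num) ?_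
  rw [jac_eq]
  simp only [coeff_add, coeff_term, coeff_one_deg]
  norm_num

theorem mem_j040 : atX j040 ∈ Jideal33 := by
  refine mem_of_coeff 0 4 0 (by norm_num) ?_
  rw [jac_eq]
  simp only [coeff_add, coeff_term, coeff_one_deg]
  norm_num

theorem mem_j031 : atX j031 ∈ Jideal33 := by
  refine mem_of_coeff 0 3 1 (by norm_num) ?_
  rw [jac_eq]
  simp only [coeff_add, coeff_term, coeff_one_deg]
  norm_num

theorem mem_j013 : atX j013 ∈ Jideal33 := by
  refine mem_of_coeff 0 1 3 (by norm_num) ?_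
  rw [jac_eq]
  simp only [coeff_add, coeff_term, coeff_one_deg]
  norm_num

theorem mem_j231 : atX j231 ∈ Jideal33 := by
  refine mem_of_coeff 2 3 1 (by norm_num) ?_
  rw [jac_eq]
  simp only [coeff_add, coeff_term, coeff_one_deg]
  norm_num

theorem mem_j222 : atX j222 ∈ Jideal33 := by
  refine mem_of_coeff 2 2 2 (by norm_num) ?_
  rw [jac_eq]
  simp only [coeff_add, coeff_term, coeff_one_deg]
  norm_num

theorem mem_mul : X (0, 1) * wOne ∈ Jideal33 := by
  have hc := certificate (S := JacR3) (X (0,0)) (X (0,1)) (X (0,2)) (X (1,0)) (X (1,1)) (X (1,2)) (X (2,0)) (X (2,1)) (X (2,2))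
  have h54 : (54 * (X (0, 1) * wOne) : JacR3) ∈ Jideal33 := by
    refine mem_of_eq ?_ hc (Ideal.add_mem _ (Ideal.add_mem _ (Ideal.add_mem _ (Ideal.add_mem _
    (Ideal.add_mem _ (Ideal.add_mem _ (Ideal.add_mem _ (Ideal.add_mem _ (Ideal.add_mem _
    (Ideal.add_mem _ (Ideal.add_mem _ (Ideal.mul_mem_left _ _ mem_j200) (Ideal.mul_mem_left _ _
    mem_j110)) (Ideal.mul_mem_left _ _ mem_j101)) (Ideal.mul_mem_left _ _ mem_j020))
    (Ideal.mul_mem_left _ _ mem_j011)) (Ideal.mul_mem_left _ _ mem_j002)) (Ideal.mul_mem_left _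
    _ mem_j130)) (Ideal.mul_mem_left _ _ mem_j040)) (Ideal.mul_mem_left _ _ mem_j031))
    (Ideal.mul_mem_left _ _ mem_j013)) (Ideal.mul_mem_left _ _ mem_j231)) (Ideal.mul_mem_left _
    _ mem_j222))
    simp only [wOne, Fin.sum_univ_three]
    ring
  have h := Ideal.mul_mem_left Jideal33 (C (1/54 : ℚ)) h54
  have e1 : (C (1/54 : ℚ) * 54 : JacR3) = 1 := by
    rw [← map_ofNat (C : ℚ →+* JacR3) 54, ← C_mul]
    norm_num
  rwa [← mul_assoc, e1, one_mul] at h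

end Jac33Aux

/-- `w₁² ∈ J_{3,3}`; in particular `w₁` lies in the radical of `J_{3,3}`. -/
theorem stmt16 : wOne ^ 2 ∈ Jideal33 ∧ wOne ∈ Jideal33.radical := by
  have h : wOne ^ 2 ∈ Jideal33 := by
    have h1 := Ideal.mul_mem_left Jideal33 (X (0, 1) *
      ∑ m : Fin 3, ∑ p : Fin 3, X (0, m) * X (m, 2) ^ 2 * X (m, p) * X (p, 0) ^ 3) Jac33Aux.mem_mul
    have e : wOne ^ 2 = (X (0, 1) * ∑ m : Fin 3, ∑ p : Fin 3,
        X (0, m) * X (m, 2) ^ 2 * X (m, p) * X (p, 0) ^ 3) * (X (0, 1) * wOne) := by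
      rw [wOne]
      ring
    rw [e]
    exact h1
  exact ⟨h, 2, h⟩
end
end

section
/- Let n = 3 and d = 2, and set z₁ = a_{1,2} · Σ_{m=1}^{3} Σ_{p=1}^{3} a_{1,m} a_{m,3} a_{m,p} a_{p,1}² ∈ R (this is z(fern_{2,3}, μ) for the root-leaf labeling μ = (1,(2),(3),(1,1))). Let I_{nil-2} be the ideal of R generated by the nine entries (A²)_{i,j}, 1 ≤ i, j ≤ 3, of the square of the matrix A = (a_{i,j}). Then z₁ lies in the ideal J_{2,3} + I_{nil-2}. -/
open MvPolynomial Matrix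

noncomputable section

/-- The matrix `A` with entries the indeterminates `a_{i,j}`. -/
def Amat3 : Matrix (Fin 3) (Fin 3) JacR3 := fun i j => X (i, j)

/-- `I_{nil-2}`, the ideal generated by the nine entries of `A²`. -/
def InilTwo : Ideal JacR3 :=
  Ideal.span {r : JacR3 | ∃ i j : Fin 3, (Amat3 ^ 2) i j = r}

/-- The membership certificate, as an identity in an arbitrary commutative ring: if the first
two rows of linear relations hold then the value of `z₁` vanishes. -/
theorem zOne_certificate {S : Type*} [CommRing S] (a00 a01 a02 a10 a11 a12 a20 a21 a22 : S)
    (hn00 : a00*a00 + a01*a10 + a02*a20 = 0)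
    (hn01 : a00*a01 + a01*a11 + a02*a21 = 0)
    (hn02 : a00*a02 + a01*a12 + a02*a22 = 0)
    (hn10 : a10*a00 + a11*a10 + a12*a20 = 0)
    (hn11 : a10*a01 + a11*a11 + a12*a21 = 0)
    (hl0 : a00*a00 + a11*a10 + a22*a20 = 0)
    (hl1 : a00*a01 + a11*a11 + a22*a21 = 0) :
    a01 * ((a00*a02*a00*a00^2 + a00*a02*a01*a10^2 + a00*a02*a02*a20^2) +
      (a01*a12*a10*a00^2 + a01*a12*a11*a10^2 + a01*a12*a12*a20^2) +
      (a02*a22*a20*a00^2 + a02*a22*a21*a10^2 + a02*a22*a22*a20^2)) = 0 := by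
  linear_combination (a01*a12*a20*a20 + a01*a20*a20*a22 + a01*a10*a10*a21 - a00*a00*a01*a20 + a00*a00*a00*a21 - a00*a11*a20*a21 + a00*a10*a21*a21 + a00*a00*a20*a21 - a00*a01*a20*a20 + a00*a00*a10*a21) * hn02 +
    (-a01*a12*a20*a22 - a01*a10*a12*a21 - a00*a01*a12*a20 + a00*a01*a02*a20 - a00*a01*a01*a10 - a00*a01*a12*a21 + a00*a00*a01*a12 + a00*a11*a21*a22 + a00*a01*a10*a21 + a00*a00*a01*a20 - a00*a11*a12*a21 + a00*a01*a11*a12 + a00*a00*a21*a22 - a00*a00*a12*a21) * hn00 +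
    (-a01*a01*a20*a22 - a01*a01*a10*a11 - a00*a01*a01*a11 + a00*a00*a01*a22 - 2*a00*a00*a01*a11 - a00*a00*a01*a02 + a00*a01*a01*a20 + a00*a01*a11*a21 - a00*a01*a11*a11 - a00*a01*a02*a11) * hn10 +
    (a01*a10*a12*a20 - a00*a01*a10*a10 - a00*a01*a10*a12 + a00*a01*a12*a20 - a00*a10*a21*a22 - a00*a00*a10*a21 - a00*a01*a10*a20 - 2*a00*a00*a20*a22 + a00*a00*a11*a20 + a00*a11*a12*a20 - a00*a00*a00*a20 - a00*a00*a00*a12 - a00*a00*a00*a00 + a00*a00*a12*a20 - a00*a00*a10*a22 - a00*a00*a00*a10) * hn01 +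
    (a00*a01*a02*a10 + a00*a01*a01*a10 + a00*a00*a01*a10 - a00*a01*a10*a21 + a00*a01*a10*a11 - a00*a00*a01*a20 + a00*a00*a00*a11 + a00*a00*a00*a02 + a00*a00*a00*a00) * hn11 +
    (a01*a01*a10*a11 + a01*a01*a10*a12 + 2*a00*a00*a01*a02 + a00*a01*a01*a10 + 2*a00*a00*a01*a11 + 2*a00*a00*a00*a01) * hl0 +
    (-a00*a00*a00*a11 - a00*a00*a00*a02 - a00*a00*a00*a00) * hl1

/-- The linear coefficients of the Jacobian. -/
theorem coeff_single_jacPoly23 (j : Fin 3) :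
    coeff (Finsupp.single j 1) jacPoly23 =
      -2 * ∑ i : Fin 3, (X (i, i) : JacR3) * X (i, j) := by
  have h := coeff_pderiv (i := j) jacPoly23 0
  simp only [zero_add, Finsupp.coe_zero, Pi.zero_apply, Nat.cast_zero, mul_one] at h
  rw [← h, ← constantCoeff_eq, jacPoly23, Matrix.det_fin_three]
  have h2 : constantCoeff (2 : MvPolynomial (Fin 3) JacR3) = 2 := map_ofNat _ 2
  fin_cases j <;>
  · simp [degLinMap23, Fin.sum_univ_three, pderiv_X, Derivation.leibniz, Pi.single_apply, h2]
    ring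

theorem linear_mem (j : Fin 3) :
    ∑ i : Fin 3, (X (i, i) : JacR3) * X (i, j) ∈ Jideal23 + InilTwo := by
  have h : coeff (Finsupp.single j 1) jacPoly23 ∈ Jideal23 :=
    Ideal.subset_span ⟨Finsupp.single j 1, by simp, rfl⟩
  have h2 := Ideal.mul_mem_left Jideal23 (C (-1/2 : ℚ)) h
  have h3 : (C (-1/2 : ℚ) : JacR3) * (-2) = 1 := by
    have : (-2 : JacR3) = C (-2 : ℚ) := by
      rw [map_neg, map_ofNat]
    rw [this, ← C_mul]
    norm_num
  rw [coeff_single_jacPoly23, ← mul_assoc, h3, one_mul] at h2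
  exact Ideal.mem_sup_left h2

theorem square_mem (i j : Fin 3) :
    ∑ k : Fin 3, (X (i, k) : JacR3) * X (k, j) ∈ Jideal23 + InilTwo := by
  refine Ideal.mem_sup_right (Ideal.subset_span ⟨i, j, ?_⟩)
  simp [pow_two, Matrix.mul_apply, Amat3]

/-- `z₁ ∈ J_{2,3} + I_{nil-2}`. -/
theorem stmt17 : zOne ∈ Jideal23 + InilTwo := by
  have hn := fun i j => Ideal.Quotient.eq_zero_iff_mem.mpr (square_mem i j)
  have hl := fun j => Ideal.Quotient.eq_zero_iff_mem.mpr (linear_mem j)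
  rw [← Ideal.Quotient.eq_zero_iff_mem]
  simp only [Fin.sum_univ_three, map_add, map_mul] at hn hl
  simp only [zOne, Fin.sum_univ_three, map_add, map_mul, map_pow]
  exact zOne_certificate _ _ _ _ _ _ _ _ _ (hn 0 0) (hn 0 1) (hn 0 2) (hn 1 0) (hn 1 1)
    (hl 0) (hl 1)
end
end

section
/- Let n = 3 and d = 2, and set z₁ = a_{1,2} · Σ_{m=1}^{3} Σ_{p=1}^{3} a_{1,m} a_{m,3} a_{m,p} a_{p,1}² ∈ R (this is z(fern_{2,3}, μ) for the root-leaf labeling μ = (1,(2),(3),(1,1))). Let I_{char} be the ideal of R generated by the nonconstant coefficients of the characteristic polynomial of the matrix A = (a_{i,j}), namely the trace of A, the sum of the 2×2 principal minors of A, and det(A). Then z₁ lies in the ideal J_{2,3} + I_{char}. -/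
open MvPolynomial Matrix

noncomputable section

/-- `I_{char}`, the ideal generated by the nonconstant coefficients of the characteristic
polynomial of `A`: the trace of `A`, the sum of the `2×2` principal minors of `A`, and
`det A`. -/
def Ichar : Ideal JacR3 :=
  Ideal.span
    {Amat3.trace,
     (Amat3 0 0 * Amat3 1 1 - Amat3 0 1 * Amat3 1 0) +
       (Amat3 0 0 * Amat3 2 2 - Amat3 0 2 * Amat3 2 0) +
       (Amat3 1 1 * Amat3 2 2 - Amat3 1 2 * Amat3 2 1),
     Amat3.det}

/-- The membership certificate, in any commutative ring in which `2` is cancellable. -/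
theorem cert_aux {S : Type*} [CommRing S] (two : ∀ x : S, 2 * x = 0 → x = 0)
    (a b c d e f g h i : S) (tr : a + e + i = 0)
    (dt : a * (e * i - f * h) - b * (d * i - f * g) + c * (d * h - e * g) = 0)
    (J : ∀ x y w : S,
      (1 - 2 * (a * x + b * y + c * w) * a) *
        ((1 - 2 * (d * x + e * y + f * w) * e) * (1 - 2 * (g * x + h * y + i * w) * i)
          - (2 * (d * x + e * y + f * w) * f) * (2 * (g * x + h * y + i * w) * h))
      - (2 * (a * x + b * y + c * w) * b) *
        ((2 * (d * x + e * y + f * w) * d) * (1 - 2 * (g * x + h * y + i * w) * i)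
          + (2 * (d * x + e * y + f * w) * f) * (2 * (g * x + h * y + i * w) * g))
      - (2 * (a * x + b * y + c * w) * c) *
        ((2 * (d * x + e * y + f * w) * d) * (2 * (g * x + h * y + i * w) * h)
          + (1 - 2 * (d * x + e * y + f * w) * e) * (2 * (g * x + h * y + i * w) * g)) = 1) :
    b * ((a * c * a * a ^ 2 + a * c * b * d ^ 2 + a * c * c * g ^ 2)
      + (b * f * d * a ^ 2 + b * f * e * d ^ 2 + b * f * f * g ^ 2)
      + (c * i * g * a ^ 2 + c * i * h * d ^ 2 + c * i * i * g ^ 2)) = 0 := by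
  obtain rfl : i = -(a + e) := by linear_combination tr
  -- the linear part of the Jacobian
  have lin : ∀ x y w : S, a * (a * x + b * y + c * w) + e * (d * x + e * y + f * w)
      + (-(a + e)) * (g * x + h * y + (-(a + e)) * w) = 0 := by
    intro x y w
    apply two; apply two
    linear_combination (-1) * J x y w + J (-x) (-y) (-w) - 16 * (a * x + b * y + c * w) *
      (d * x + e * y + f * w) * (g * x + h * y + (-(a + e)) * w) * dt
  -- the quadratic part of the Jacobian
  have quad : ∀ x y w : S,
      (a * x + b * y + c * w) * (d * x + e * y + f * w) * (a * e - b * d)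
      + (a * x + b * y + c * w) * (g * x + h * y + (-(a + e)) * w) * (a * (-(a + e)) - c * g)
      + (d * x + e * y + f * w) * (g * x + h * y + (-(a + e)) * w) * (e * (-(a + e)) - f * h)
        = 0 := by
    intro x y w
    apply two; apply two; apply two
    linear_combination J x y w + J (-x) (-y) (-w)
  have J0 := lin 1 0 0
  have J1 := lin 0 1 0
  have J2 := lin 0 0 1
  have Q00 := quad 1 0 0
  have Q22 := quad 0 0 1
  have Q := quad 1 0 1
  linear_combination (-(a * b)) * (Q - Q00 - Q22) + b * c * Q00 + b * f * g * dt
    + (b * c * g ^ 2 + a * b * d * e + a ^ 3 * b) * J2 + (b * c * d ^ 2 - a * b * d * f) * J1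
    + (b ^ 2 * d * f - b * c * d * e) * J0

/-- If a ring hom kills all nonconstant coefficients, evaluation is constant. -/
theorem eval_const_aux {S : Type*} [CommRing S] (φ : JacR3 →+* S)
    (p : MvPolynomial (Fin 3) JacR3) (hp : ∀ α : Fin 3 →₀ ℕ, α ≠ 0 → φ (coeff α p) = 0)
    (v : Fin 3 → S) : eval₂ φ v p = φ (coeff 0 p) := by
  have : map φ p = C (φ (coeff 0 p)) := by
    ext α
    rw [coeff_map, coeff_C]
    split_ifs with h
    · rw [h]
    · exact hp α (Ne.symm h)
  rw [← eval_map, this, eval_C]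

/-- `z₁ ∈ J_{2,3} + I_{char}`. -/
theorem stmt18 : zOne ∈ Jideal23 + Ichar := by
  rw [← Ideal.Quotient.eq_zero_iff_mem]
  set φ := Ideal.Quotient.mk (Jideal23 + Ichar) with hφ
  have hJ : ∀ α : Fin 3 →₀ ℕ, α ≠ 0 → φ (coeff α jacPoly23) = 0 := fun α hα =>
    Ideal.Quotient.eq_zero_iff_mem.2
      (Ideal.mem_sup_left (Ideal.subset_span ⟨α, hα, rfl⟩))
  have htr : φ Amat3.trace = 0 :=
    Ideal.Quotient.eq_zero_iff_mem.2 (Ideal.mem_sup_right (Ideal.subset_span (by simp)))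
  have hdt : φ Amat3.det = 0 :=
    Ideal.Quotient.eq_zero_iff_mem.2 (Ideal.mem_sup_right (Ideal.subset_span (by simp)))
  have hev : ∀ v, eval₂ φ v jacPoly23 = eval₂ φ 0 jacPoly23 := fun v => by
    rw [eval_const_aux φ _ hJ v, eval_const_aux φ _ hJ 0]
  have two : ∀ x : JacR3 ⧸ (Jideal23 + Ichar), 2 * x = 0 → x = 0 := by
    intro x hx
    have h2 : φ (C (1 / 2)) * 2 = 1 := by
      rw [← map_ofNat φ 2, ← map_mul, ← map_one φ]
      congr 1
      rw [← map_ofNat (C : ℚ →+* JacR3) 2, ← map_mul]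
      norm_num
    linear_combination φ (C (1 / 2)) * hx - x * h2
  have key := cert_aux two (φ (X (0, 0))) (φ (X (0, 1))) (φ (X (0, 2))) (φ (X (1, 0)))
    (φ (X (1, 1))) (φ (X (1, 2))) (φ (X (2, 0))) (φ (X (2, 1))) (φ (X (2, 2)))
    (by simpa [Matrix.trace, Fin.sum_univ_three, Amat3] using htr)
    (by
      rw [Matrix.det_fin_three] at hdt
      simp only [Amat3, map_sub, map_add, map_mul] at hdt
      linear_combination hdt)
    (by
      intro x y w
      have := hev ![x, y, w]
      simp [jacPoly23, degLinMap23, Matrix.det_fin_three, Fin.sum_univ_three, pderiv_X,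
        Pi.single_apply, pderiv_mul, pderiv_pow] at this
      linear_combination this)
  simp only [zOne, Fin.sum_univ_three, map_add, map_mul, map_pow]
  linear_combination key
end
end
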